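/- arXiv:2103.05415 — 4 statements merged into one kernel-verified Lean document; each statement's English description precedes it below -/
import Mathlib

section
/- Fix a prime power q and m ∈ ℕ. For each n ∈ ℕ let N_n be a set of m-dimensional F_q-subspaces of F_q^{[n]} such that: (i) N_n is stable under the actions of Sym([n]), of (F_q^*)^{[n]}, and of Aut(F_q); and (ii) for every injection π : [n'] → [n] and every C ∈ N_n, if dim(C∘π) = m then C∘π ∈ N_{n'}. Then the number of isomorphism classes of codes contained in N_n is a quasipolynomial in n for all n ≫ 0. -/
/-- A function `f : ℤ → ℚ` is a quasipolynomial if there are an integer `N ≥ 1` and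
polynomials `p i ∈ ℚ[t]` such that `f n = p (n mod N) (n)` for all `n`. -/
def IsQuasiPolynomial (f : ℤ → ℚ) : Prop :=
  ∃ N : ℕ, 0 < N ∧ ∃ p : ZMod N → Polynomial ℚ,
    ∀ n : ℤ, f n = (p (n : ZMod N)).eval (n : ℚ)

/-- A quantity `a : ℕ → ℕ` is a quasipolynomial in `n` for all `n ≫ 0`. -/
def QuasiPolynomialCount (a : ℕ → ℕ) : Prop :=
  ∃ f : ℤ → ℚ, IsQuasiPolynomial f ∧ ∃ n₀ : ℕ, ∀ n : ℕ, n₀ ≤ n → (a n : ℚ) = f n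

/-- The combined action of a coordinate permutation `π`, a scaling vector `s` and a field
automorphism `φ` on words `[n] → F`. -/
def codeMap {F : Type} [Field F] {n : ℕ}
    (π : Equiv.Perm (Fin n)) (s : Fin n → Fˣ) (φ : F ≃+* F) (v : Fin n → F) : Fin n → F :=
  fun i => φ ((s i : F) * v (π i))

/-!
Choose a generator matrix of a code of dimension `m` and record how often each column occurs up to
scalars. Two codes with generator matrices of full rank are isomorphic exactly when these
multiplicity functions lie in one orbit of the finite group `ΓL(m, F)`, acting on the points of the
projective space together with `0`. Puncturing lowers the multiplicities, so those of a
puncture-closed family form an order-connected invariant set `S`, and the isomorphism classes of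
length `n` are the orbits on the elements of `S` with sum `n`. By Burnside's lemma it suffices to
count the elements fixed by a single group element; being constant on its cycles, they are vectors
indexed by the cycles, weighted by the cycle lengths, in an order-connected set again. Such a set
is a difference of lower sets `D`. The elements of `D` either have `i`-th coordinate `0` or are
obtained from elements of the lower set `{μ | μ + eᵢ ∈ D}` by adding `eᵢ`, which gives a recursion
for their number that terminates because `ℕ^r` is well-quasi-ordered.
-/

section Sequences

open Polynomial

/-- The shift operator `a ↦ (n ↦ a (n + 1))` on sequences of rational numbers. -/
def shift : Module.End ℚ (ℕ → ℚ) := LinearMap.funLeft ℚ ℚ Nat.succ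

theorem shift_pow_apply (j : ℕ) (a : ℕ → ℚ) (n : ℕ) : (shift ^ j) a n = a (n + j) := by
  induction j generalizing n with
  | zero => rfl
  | succ j ih =>
    rw [pow_succ', Module.End.mul_apply, shift, LinearMap.funLeft_apply, ← shift, ih,
      Nat.succ_add_eq_add_succ]

theorem aeval_shift_eq_zero_of_dvd {P Q : ℚ[X]} (h : P ∣ Q) {a : ℕ → ℚ}
    (ha : aeval shift P a = 0) : aeval shift Q a = 0 := by
  obtain ⟨R, rfl⟩ := h
  rw [mul_comm, map_mul, Module.End.mul_apply, ha, map_zero]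

/-- The eventually quasipolynomial sequences, encoded as those annihilated by a polynomial
`X ^ j * (X ^ N - 1) ^ k` in the shift operator: `N` is a period, `k` bounds the degrees and
the values before index `j` are arbitrary. -/
def eventuallyQuasiPolynomial : Submodule ℚ (ℕ → ℚ) where
  carrier := {a | ∃ N > 0, ∃ j k : ℕ, aeval shift (X ^ j * (X ^ N - 1) ^ k : ℚ[X]) a = 0}
  zero_mem' := ⟨1, one_pos, 0, 0, map_zero _⟩
  smul_mem' := by
    rintro c a ⟨N, hN, j, k, ha⟩
    exact ⟨N, hN, j, k, by rw [map_smul, ha, smul_zero]⟩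
  add_mem' := by
    rintro a b ⟨N, hN, j, k, ha⟩ ⟨M, hM, i, l, hb⟩
    refine ⟨N * M, Nat.mul_pos hN hM, j + i, k + l, ?_⟩
    have dvd_of_le {K j' k' : ℕ} (hK : K ∣ N * M) (hj : j' ≤ j + i) (hk : k' ≤ k + l) :
        (X ^ j' * (X ^ K - 1) ^ k' : ℚ[X]) ∣ X ^ (j + i) * (X ^ (N * M) - 1) ^ (k + l) :=
      mul_dvd_mul (pow_dvd_pow _ hj)
        ((pow_dvd_pow_of_dvd (dvd_pow_sub_one_of_dvd hK) k').trans (pow_dvd_pow _ hk))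
    rw [map_add,
      aeval_shift_eq_zero_of_dvd (dvd_of_le ⟨M, rfl⟩ (by lia) (by lia)) ha,
      aeval_shift_eq_zero_of_dvd (dvd_of_le ⟨N, mul_comm N M⟩ (by lia) (by lia)) hb, add_zero]

theorem shift_pow_mem_eventuallyQuasiPolynomial {a : ℕ → ℚ} (i : ℕ) :
    (shift ^ i) a ∈ eventuallyQuasiPolynomial ↔ a ∈ eventuallyQuasiPolynomial := by
  have hshift : (shift ^ i) a = aeval shift (X ^ i : ℚ[X]) a := by simp
  constructor
  · rintro ⟨N, hN, j, k, ha⟩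
    refine ⟨N, hN, j + i, k, ?_⟩
    rw [hshift, ← Module.End.mul_apply, ← map_mul] at ha
    convert ha using 3
    ring
  · rintro ⟨N, hN, j, k, ha⟩
    refine ⟨N, hN, j, k, ?_⟩
    rw [hshift, ← Module.End.mul_apply, ← map_mul]
    exact aeval_shift_eq_zero_of_dvd (dvd_mul_right _ _) ha

theorem mem_eventuallyQuasiPolynomial_of_shift_pow_sub {a : ℕ → ℚ} {w : ℕ} (hw : 0 < w)
    (ha : (shift ^ w) a - a ∈ eventuallyQuasiPolynomial) : a ∈ eventuallyQuasiPolynomial := by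
  obtain ⟨N, hN, j, k, ha⟩ := ha
  refine ⟨w * N, Nat.mul_pos hw hN, j, k + 1, ?_⟩
  have hsub : (shift ^ w) a - a = aeval shift (X ^ w - 1 : ℚ[X]) a := by simp
  rw [hsub, ← Module.End.mul_apply, ← map_mul] at ha
  refine aeval_shift_eq_zero_of_dvd ?_ ha
  rw [mul_assoc, pow_succ]
  exact mul_dvd_mul dvd_rfl (mul_dvd_mul
    (pow_dvd_pow_of_dvd (dvd_pow_sub_one_of_dvd (dvd_mul_left N w)) k)
    (dvd_pow_sub_one_of_dvd (dvd_mul_right w N)))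

theorem exists_polynomial_of_fwdDiff_iter_eq_zero {M K : Type*} [AddCommMonoid M] [Field K]
    [CharZero K] {h : M} {f : M → K} {k : ℕ} (hf : (fwdDiff h)^[k] f = 0) (y : M) :
    ∃ p : K[X], ∀ n : ℕ, f (y + n • h) = p.eval (n : K) := by
  have hvanish (i : ℕ) (hi : k ≤ i) : (fwdDiff h)^[i] f = 0 := by
    rw [← Nat.sub_add_cancel hi, Function.iterate_add_apply, hf]
    exact Function.iterate_fixed (by ext; simp [fwdDiff]) _
  refine ⟨∑ i ∈ Finset.range k, C ((fwdDiff h)^[i] f y / (i.factorial : K)) *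
    descPochhammer K i, fun n => ?_⟩
  have hterm (i : ℕ) : (C ((fwdDiff h)^[i] f y / (i.factorial : K)) * descPochhammer K i).eval
      (n : K) = n.choose i • (fwdDiff h)^[i] f y := by
    have : (i.factorial : K) ≠ 0 := by exact_mod_cast i.factorial_ne_zero
    rw [eval_mul, eval_C, descPochhammer_eval_eq_descFactorial,
      Nat.descFactorial_eq_factorial_mul_choose, nsmul_eq_mul, Nat.cast_mul]
    field_simp
  simp only [eval_finsetSum, hterm, shift_eq_sum_fwdDiff_iter h f n y]
  calc ∑ i ∈ Finset.range (n + 1), n.choose i • (fwdDiff h)^[i] f y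
      = ∑ i ∈ Finset.range (max (n + 1) k), n.choose i • (fwdDiff h)^[i] f y :=
        Finset.sum_subset (Finset.range_mono (le_max_left _ _)) fun i _ hi => by
          rw [Nat.choose_eq_zero_of_lt (by simpa using hi), zero_smul]
    _ = ∑ i ∈ Finset.range k, n.choose i • (fwdDiff h)^[i] f y :=
        (Finset.sum_subset (Finset.range_mono (le_max_right _ _)) fun i _ hi => by
          rw [hvanish i (by simpa using hi), Pi.zero_apply, smul_zero]).symm

theorem fwdDiff_iterate_eq_aeval_shift (N k : ℕ) (a : ℕ → ℚ) :
    (fwdDiff N)^[k] a = aeval shift ((X ^ N - 1) ^ k : ℚ[X]) a := by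
  have hone : (fwdDiff N : (ℕ → ℚ) → ℕ → ℚ) = aeval shift (X ^ N - 1 : ℚ[X]) := by
    ext a n
    simp [fwdDiff, shift_pow_apply]
  rw [hone, map_pow, Module.End.pow_apply]

theorem exists_polynomial_on_progression {a : ℕ → ℚ} {N j k : ℕ} (hN : 0 < N)
    (ha : aeval shift (X ^ j * (X ^ N - 1) ^ k : ℚ[X]) a = 0) {i : ℕ} (hi : j ≤ i) :
    ∃ p : ℚ[X], ∀ t : ℕ, a (i + t * N) = p.eval ((i + t * N : ℕ) : ℚ) := by
  have hdiff : (fwdDiff N)^[k] ((shift ^ j) a) = 0 := by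
    rw [fwdDiff_iterate_eq_aeval_shift, ← ha, mul_comm, map_mul, Module.End.mul_apply,
      aeval_X_pow]
  obtain ⟨p, hp⟩ := exists_polynomial_of_fwdDiff_iter_eq_zero hdiff (i - j)
  refine ⟨p.comp (C (N : ℚ)⁻¹ * (X - C (i : ℚ))), fun t => ?_⟩
  have hN' : (N : ℚ) ≠ 0 := by positivity
  have harg : (N : ℚ)⁻¹ * (((i + t * N : ℕ) : ℚ) - i) = t := by
    push_cast
    field_simp
    ring
  rw [eval_comp, eval_mul, eval_sub, eval_C, eval_X, eval_C, harg, ← hp, shift_pow_apply,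
    smul_eq_mul]
  congr 1
  lia

theorem quasiPolynomialCount_of_mem_eventuallyQuasiPolynomial {a : ℕ → ℕ}
    (h : (fun n => (a n : ℚ)) ∈ eventuallyQuasiPolynomial) : QuasiPolynomialCount a := by
  obtain ⟨N, hN, j, k, ha⟩ := h
  have : NeZero N := ⟨hN.ne'⟩
  choose p hp using fun r : ZMod N =>
    exists_polynomial_on_progression hN ha (Nat.le_add_right j (r - j).val)
  refine ⟨fun n => (p n).eval (n : ℚ), ⟨N, hN, p, fun _ => rfl⟩, j, fun n hn => ?_⟩
  have hprog : j + ((n : ZMod N) - j).val + (n - j) / N * N = n := by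
    rw [← Nat.cast_sub hn, ZMod.val_natCast, add_assoc, Nat.mod_add_div', Nat.add_sub_cancel' hn]
  simpa only [hprog, Int.cast_natCast] using hp n ((n - j) / N)

end Sequences

section WeightedCounting

theorem wellFounded_lt_lowerSet (α : Type*) [Preorder α] [WellQuasiOrderedLE α] :
    WellFounded ((· < ·) : LowerSet α → LowerSet α → Prop) := by
  rw [RelEmbedding.wellFounded_iff_isEmpty]
  refine ⟨fun f => ?_⟩
  have hanti : StrictAnti f := fun m n h => f.map_rel_iff.2 h
  choose x hx hx' using fun n => Set.exists_of_ssubset (hanti (Nat.lt_succ_self n))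
  obtain ⟨m, n, hmn, hle⟩ := wellQuasiOrdered_le x
  exact hx' m ((f m.succ).lower hle (hanti.antitone hmn (hx n)))

variable {ι : Type*} [Fintype ι]

/-- The elements of `S` of total weight `n`, a vector `μ` having weight `∑ i, w i * μ i`. -/
def weightLevel (w : ι → ℕ) (S : Set (ι → ℕ)) (n : ℕ) : Set (ι → ℕ) :=
  {μ ∈ S | w ⬝ᵥ μ = n}

theorem finite_weightLevel {w : ι → ℕ} (hw : ∀ i, 0 < w i) (S : Set (ι → ℕ)) (n : ℕ) :
    (weightLevel w S n).Finite := by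
  classical
  refine (Set.finite_Iic (Function.const ι n)).subset ?_
  rintro μ ⟨-, rfl⟩ i
  calc μ i ≤ w i * μ i := Nat.le_mul_of_pos_left _ (hw i)
    _ ≤ w ⬝ᵥ μ := Finset.single_le_sum (f := fun i => w i * μ i) (fun _ _ => Nat.zero_le _)
      (Finset.mem_univ i)

theorem ncard_weightLevel_sdiff {w : ι → ℕ} (hw : ∀ i, 0 < w i) {S T : Set (ι → ℕ)} (h : S ⊆ T)
    (n : ℕ) : ((weightLevel w (T \ S) n).ncard : ℚ) =
      (weightLevel w T n).ncard - (weightLevel w S n).ncard := by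
  have hsub : weightLevel w S n ⊆ weightLevel w T n := fun μ hμ => ⟨h hμ.1, hμ.2⟩
  have hdiff : weightLevel w (T \ S) n = weightLevel w T n \ weightLevel w S n := by
    ext μ
    simp only [weightLevel, Set.mem_sdiff, Set.mem_ofPred_eq]
    tauto
  rw [hdiff, eq_sub_iff_add_eq]
  exact_mod_cast Set.ncard_sdiff_add_ncard_of_subset hsub (finite_weightLevel hw T n)

theorem ncard_weightLevel_add [DecidableEq ι] {w : ι → ℕ} (hw : ∀ i, 0 < w i) (S : Set (ι → ℕ))
    (i : ι) (n : ℕ) :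
    (weightLevel w S (n + w i)).ncard = (weightLevel w (S ∩ {μ | μ i = 0}) (n + w i)).ncard +
      (weightLevel w {μ | μ + Pi.single i 1 ∈ S} n).ncard := by
  have hinj : Function.Injective fun μ : ι → ℕ => μ + Pi.single i 1 := add_left_injective _
  have hweight (μ : ι → ℕ) : w ⬝ᵥ (μ + Pi.single i 1) = w ⬝ᵥ μ + w i := by
    rw [dotProduct_add, dotProduct_single_one]
  rw [← Set.ncard_image_of_injective (weightLevel w _ n) hinj,
    ← Set.ncard_union_eq ?_ (finite_weightLevel hw _ _) ((finite_weightLevel hw _ _).image _)]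
  · congr 1
    ext μ
    refine ⟨fun ⟨hμ, hn⟩ => ?_, ?_⟩
    · obtain h0 | h0 := Nat.eq_zero_or_pos (μ i)
      · exact .inl ⟨⟨hμ, h0⟩, hn⟩
      · have hμ' : μ - Pi.single i 1 + Pi.single i 1 = μ :=
          tsub_add_cancel_of_le (update_le_iff.2 ⟨h0, fun _ _ => Nat.zero_le _⟩)
        rw [← hμ'] at hμ hn
        exact .inr ⟨_, ⟨hμ, Nat.add_right_cancel ((hweight _).symm.trans hn)⟩, hμ'⟩
    · rintro (⟨⟨hμ, -⟩, hn⟩ | ⟨μ, ⟨hμ, rfl⟩, rfl⟩)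
      · exact ⟨hμ, hn⟩
      · exact ⟨hμ, hweight μ⟩
  · rw [Set.disjoint_left]
    rintro _ ⟨⟨-, h0⟩, -⟩ ⟨μ, -, rfl⟩
    simp at h0

theorem ncard_weightLevel_lowerSet_mem_eventuallyQuasiPolynomial {w : ι → ℕ} (hw : ∀ i, 0 < w i)
    (D : LowerSet (ι → ℕ)) :
    (fun n => ((weightLevel w D n).ncard : ℚ)) ∈ eventuallyQuasiPolynomial := by
  classical
  induction D using (wellFounded_lt_lowerSet (ι → ℕ)).induction with | _ D ih
  by_cases hD : ∃ i, ∃ μ ∈ D, μ i ≠ 0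
  · obtain ⟨i, μ, hμ, hμi⟩ := hD
    let D₀ : LowerSet (ι → ℕ) :=
      ⟨D ∩ {μ | μ i = 0}, D.lower.inter fun μ ν hνμ h0 => Nat.le_zero.1 ((hνμ i).trans_eq h0)⟩
    let D₁ : LowerSet (ι → ℕ) :=
      ⟨{μ | μ + Pi.single i 1 ∈ D}, fun _ _ hle h => D.lower (add_le_add_left hle _) h⟩
    have hD₀ : D₀ < D := lt_of_le_not_ge (fun _ h => h.1) fun h => hμi (h hμ).2
    have hD₁ : D₁ ≤ D := fun _ h => D.lower (le_add_of_nonneg_right (fun _ => Nat.zero_le _)) h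
    have hrec : (shift ^ w i) (fun n => ((weightLevel w D n).ncard : ℚ)) =
        (shift ^ w i) (fun n => ((weightLevel w D₀ n).ncard : ℚ)) +
          fun n => ((weightLevel w D₁ n).ncard : ℚ) := by
      ext n
      rw [Pi.add_apply, shift_pow_apply, shift_pow_apply, ncard_weightLevel_add hw, Nat.cast_add]
      rfl
    have h₀ := (shift_pow_mem_eventuallyQuasiPolynomial (w i)).2 (ih D₀ hD₀)
    obtain hlt | heq := hD₁.lt_or_eq
    · rw [← shift_pow_mem_eventuallyQuasiPolynomial (w i), hrec]
      exact add_mem h₀ (ih D₁ hlt)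
    · refine mem_eventuallyQuasiPolynomial_of_shift_pow_sub (hw i) ?_
      rwa [hrec, heq, add_sub_cancel_right]
  · push Not at hD
    rw [← shift_pow_mem_eventuallyQuasiPolynomial 1]
    convert zero_mem eventuallyQuasiPolynomial
    ext n
    rw [shift_pow_apply]
    have hempty : weightLevel w D (n + 1) = ∅ := by
      refine Set.eq_empty_of_forall_notMem fun μ ⟨hμ, hn⟩ => ?_
      rw [show μ = 0 from funext fun i => hD i μ hμ, dotProduct_zero] at hn
      lia
    simp [hempty]

theorem ncard_weightLevel_mem_eventuallyQuasiPolynomial {w : ι → ℕ} (hw : ∀ i, 0 < w i)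
    {S : Set (ι → ℕ)} (hS : S.OrdConnected) :
    (fun n => ((weightLevel w S n).ncard : ℚ)) ∈ eventuallyQuasiPolynomial := by
  let T := lowerClosure S
  let U := T ⊓ (upperClosure S).compl
  have hST : S = (T : Set (ι → ℕ)) \ U := by
    rw [LowerSet.coe_inf, UpperSet.coe_compl, Set.sdiff_self_inter, sdiff_compl, inf_comm]
    exact hS.upperClosure_inter_lowerClosure.symm
  have hsub : (U : Set (ι → ℕ)) ⊆ T := fun _ h => h.1
  simp only [hST, ncard_weightLevel_sdiff hw hsub]
  exact sub_mem (ncard_weightLevel_lowerSet_mem_eventuallyQuasiPolynomial hw T)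
    (ncard_weightLevel_lowerSet_mem_eventuallyQuasiPolynomial hw U)

end WeightedCounting

section Fibers

variable {ι X : Type*}

/-- The number of indices at which a family takes each value: the family seen as a multiset of
points, up to reordering. Only meaningful when the fibers are finite. -/
noncomputable def fiberCard (f : ι → X) : X → ℕ := fun p => (f ⁻¹' {p}).ncard

theorem fiberCard_dotProduct [Fintype ι] [Fintype X] (f : ι → X) (ν : X → ℕ) :
    fiberCard f ⬝ᵥ ν = ∑ i, ν (f i) := by
  classical
  rw [← Finset.sum_fiberwise' Finset.univ f ν]
  refine Finset.sum_congr rfl fun p _ => ?_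
  rw [Finset.sum_const, smul_eq_mul, fiberCard, ← Set.ncard_coe_finset]
  congr 2
  ext i
  simp

theorem sum_fiberCard [Fintype ι] [Fintype X] (f : ι → X) :
    ∑ p, fiberCard f p = Fintype.card ι := by
  simpa [dotProduct] using fiberCard_dotProduct f 1

theorem fiberCard_pos_iff [Finite ι] {f : ι → X} {p : X} :
    0 < fiberCard f p ↔ p ∈ Set.range f := by
  rw [fiberCard, Set.ncard_pos, Set.preimage_singleton_nonempty]

theorem fiberCard_eq_iff_exists_perm [Finite ι] {f g : ι → X} :
    fiberCard f = fiberCard g ↔ ∃ π : Equiv.Perm ι, f ∘ π = g := by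
  constructor
  · intro h
    have hfiber (p : X) : Nonempty ({i // g i = p} ≃ {i // f i = p}) :=
      Finite.card_eq.1 (congrFun h p).symm
    exact ⟨Equiv.ofFiberEquiv fun p => (hfiber p).some, funext (Equiv.ofFiberEquiv_map _)⟩
  · rintro ⟨π, rfl⟩
    ext p
    rw [fiberCard, fiberCard, Set.preimage_comp, ← Equiv.image_symm_eq_preimage,
      Set.ncard_image_of_injective _ π.symm.injective]

theorem exists_injective_fiberCard_comp_eq [Finite ι] {f : ι → X} {μ : X → ℕ}
    (h : μ ≤ fiberCard f) :
    ∃ (n : ℕ) (π : Fin n → ι), Function.Injective π ∧ fiberCard (f ∘ π) = μ := by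
  choose A hA hcard using fun p => Set.exists_subset_card_eq (h p)
  let B := ⋃ p, A p
  let e := Finite.equivFin B
  have hinj : Function.Injective (Subtype.val ∘ e.symm : Fin (Nat.card B) → ι) :=
    Subtype.val_injective.comp e.symm.injective
  have hrange : Set.range (Subtype.val ∘ e.symm : Fin (Nat.card B) → ι) = B := by
    rw [e.symm.surjective.range_comp, Subtype.range_coe]
  refine ⟨_, _, hinj, funext fun p => ?_⟩
  have hfiber : f ⁻¹' {p} ∩ B = A p := by
    ext i
    simp only [B, Set.mem_inter_iff, Set.mem_iUnion]
    constructor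
    · rintro ⟨hi, p', hp'⟩
      rwa [← hi, hA p' hp']
    · exact fun hi => ⟨hA p hi, p, hi⟩
  rw [fiberCard, Set.preimage_comp, ← Set.ncard_image_of_injective _ hinj,
    Set.image_preimage_eq_inter_range, hrange, hfiber, hcard]

theorem fiberCard_smul {G : Type*} [Group G] [MulAction G X] (g : G) (f : ι → X) :
    fiberCard (g • f) = DomMulAct.mk g⁻¹ • fiberCard f := by
  ext p
  rw [DomMulAct.smul_apply, Equiv.symm_apply_apply, fiberCard, fiberCard]
  congr 1
  ext i
  exact smul_eq_iff_eq_inv_smul g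

end Fibers

section Burnside

open MulAction DomMulAct

variable {G X : Type*} [Group G] [MulAction G X]

theorem fixedBy_mk_eq_range_comp_quotient_mk {β : Type*} (g : G) :
    fixedBy (X → β) (mk g) =
      Set.range (· ∘ Quotient.mk (orbitRel (Subgroup.zpowers g) X)) := by
  ext f
  constructor
  · intro hf
    refine ⟨Quotient.lift f ?_, rfl⟩
    rintro _ x ⟨⟨_, k, rfl⟩, rfl⟩
    exact congrFun (mem_fixedBy_zpow hf k) x
  · rintro ⟨f, rfl⟩
    ext x
    exact congrArg f (Quotient.sound ⟨⟨g, Subgroup.mem_zpowers g⟩, rfl⟩)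

variable [Fintype X]

/-- The functions in `S` with sum `n`, as an invariant set of the domain action, so that Burnside's
lemma applies to it. -/
def sumLevel (S : SubMulAction Gᵈᵐᵃ (X → ℕ)) (n : ℕ) : SubMulAction Gᵈᵐᵃ (X → ℕ) where
  carrier := {μ ∈ S | ∑ x, μ x = n}
  smul_mem' c _ h := ⟨S.smul_mem c h.1, (Equiv.sum_comp (toPerm (mk.symm c)) _).trans h.2⟩

instance finite_sumLevel (S : SubMulAction Gᵈᵐᵃ (X → ℕ)) (n : ℕ) : Finite (sumLevel S n) :=
  ((finite_weightLevel (w := 1) (fun _ => one_pos) (S : Set (X → ℕ)) n).subset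
    fun _ h => ⟨h.1, (one_dotProduct _).trans h.2⟩).to_subtype

theorem card_fixedBy_sumLevel (S : SubMulAction Gᵈᵐᵃ (X → ℕ)) {Y : Type*} [Fintype Y] {g : G}
    {q : X → Y} (hq : Function.Surjective q)
    (hfix : fixedBy (X → ℕ) (mk g) = Set.range (· ∘ q)) (n : ℕ) :
    Nat.card (fixedBy (sumLevel S n) (mk g)) =
      (weightLevel (fiberCard q) ((· ∘ q) ⁻¹' (S : Set (X → ℕ))) n).ncard := by
  rw [Nat.card_coe_set_eq, ← Set.ncard_image_of_injective _ Subtype.val_injective,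
    ← Set.ncard_image_of_injective _ hq.injective_comp_right]
  congr 1
  ext μ
  constructor
  · rintro ⟨⟨μ, hμ, hn⟩, hg, rfl⟩
    obtain ⟨ν, rfl⟩ := hfix.subset (congrArg Subtype.val hg)
    exact ⟨ν, ⟨hμ, (fiberCard_dotProduct q ν).trans hn⟩, rfl⟩
  · rintro ⟨ν, ⟨hν, hn⟩, rfl⟩
    exact ⟨⟨ν ∘ q, hν, (fiberCard_dotProduct q ν).symm.trans hn⟩,
      Subtype.ext (hfix.superset ⟨ν, rfl⟩), rfl⟩

theorem card_fixedBy_sumLevel_mem_eventuallyQuasiPolynomial {S : SubMulAction Gᵈᵐᵃ (X → ℕ)}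
    (hS : (S : Set (X → ℕ)).OrdConnected) (g : G) :
    (fun n => (Nat.card (fixedBy (sumLevel S n) (mk g)) : ℚ)) ∈ eventuallyQuasiPolynomial := by
  have : Fintype (orbitRel.Quotient (Subgroup.zpowers g) X) := Fintype.ofFinite _
  have hq := Quotient.mk_surjective (s := orbitRel (Subgroup.zpowers g) X)
  simp only [card_fixedBy_sumLevel S hq (fixedBy_mk_eq_range_comp_quotient_mk g)]
  exact ncard_weightLevel_mem_eventuallyQuasiPolynomial (fun p => fiberCard_pos_iff.2 (hq p))
    (hS.preimage_mono fun _ _ h x => h _)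

theorem card_orbits_sumLevel_mem_eventuallyQuasiPolynomial [Finite G]
    {S : SubMulAction Gᵈᵐᵃ (X → ℕ)} (hS : (S : Set (X → ℕ)).OrdConnected) :
    (fun n => (Nat.card (orbitRel.Quotient Gᵈᵐᵃ (sumLevel S n)) : ℚ)) ∈
      eventuallyQuasiPolynomial := by
  classical
  have : Finite Gᵈᵐᵃ := .of_equiv G mk
  have := Fintype.ofFinite Gᵈᵐᵃ
  have hcard : (Fintype.card Gᵈᵐᵃ : ℚ) ≠ 0 := by exact_mod_cast Fintype.card_ne_zero
  have hburnside : (fun n => (Nat.card (orbitRel.Quotient Gᵈᵐᵃ (sumLevel S n)) : ℚ)) =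
      (Fintype.card Gᵈᵐᵃ : ℚ)⁻¹ •
        ∑ c : Gᵈᵐᵃ, fun n => (Nat.card (fixedBy (sumLevel S n) c) : ℚ) := by
    ext n
    have := Fintype.ofFinite (sumLevel S n)
    have := Fintype.ofFinite (orbitRel.Quotient Gᵈᵐᵃ (sumLevel S n))
    rw [Pi.smul_apply, Finset.sum_apply, smul_eq_mul, eq_inv_mul_iff_mul_eq₀ hcard, mul_comm]
    simp only [Nat.card_eq_fintype_card]
    exact_mod_cast
      (sum_card_fixedBy_eq_card_orbits_mul_card_group Gᵈᵐᵃ (sumLevel S n)).symm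
  rw [hburnside]
  exact Submodule.smul_mem _ _ (sum_mem fun c _ =>
    card_fixedBy_sumLevel_mem_eventuallyQuasiPolynomial hS (mk.symm c))

end Burnside

section SemilinearMaps

variable {F W : Type*} [Field F] [AddCommGroup W] [Module F W]

/-- `g` is a semilinear bijection of `W` with companion field automorphism `φ`. -/
structure IsSemilinear (φ : F ≃+* F) (g : Equiv.Perm W) : Prop where
  map_add (v w : W) : g (v + w) = g v + g w
  map_smul (c : F) (w : W) : g (c • w) = φ c • g w

namespace IsSemilinear

variable {φ ψ : F ≃+* F} {g h : Equiv.Perm W}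

theorem one : IsSemilinear (RingEquiv.refl F) (1 : Equiv.Perm W) :=
  ⟨fun _ _ => rfl, fun _ _ => rfl⟩

theorem mul (hg : IsSemilinear φ g) (hh : IsSemilinear ψ h) : IsSemilinear (ψ.trans φ) (g * h) where
  map_add v w := by simp [hh.map_add, hg.map_add]
  map_smul c w := by simp [hh.map_smul, hg.map_smul]

theorem inv (hg : IsSemilinear φ g) : IsSemilinear φ.symm g⁻¹ where
  map_add v w := g.injective (by simp [hg.map_add])
  map_smul c w := g.injective (by simp [hg.map_smul])

theorem of_linearEquiv (A : W ≃ₗ[F] W) : IsSemilinear (RingEquiv.refl F) (A : W ≃ W) :=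
  ⟨A.map_add, A.map_smul⟩

theorem map_units_smul (hg : IsSemilinear φ g) (u : Fˣ) (w : W) :
    g (u • w) = Units.map (φ : F →* F) u • g w :=
  hg.map_smul u w

theorem exists_dual_apply_eq (hg : IsSemilinear φ g) (f : Module.Dual F W) :
    ∃ f' : Module.Dual F W, ∀ w, f' (g w) = φ (f w) :=
  ⟨{  toFun := fun w => φ (f (g⁻¹ w))
      map_add' := fun v w => by simp [hg.inv.map_add]
      map_smul' := fun c w => by simp [hg.inv.map_smul] }, fun w => by simp⟩

end IsSemilinear

theorem exists_isSemilinear [FiniteDimensional F W] (φ : F ≃+* F) :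
    ∃ g : Equiv.Perm W, IsSemilinear φ g := by
  let e := (Module.finBasis F W).equivFun
  refine ⟨(e.toEquiv.trans (Equiv.piCongrRight fun _ => φ.toEquiv)).trans e.symm.toEquiv,
    fun v w => ?_, fun c w => ?_⟩ <;>
  · apply e.injective
    ext i
    simp

variable (F W) in
/-- The group `ΓL(W)` of semilinear bijections of `W`. -/
def semilinearGroup : Subgroup (Equiv.Perm W) where
  carrier := {g | ∃ φ : F ≃+* F, IsSemilinear φ g}
  one_mem' := ⟨_, .one⟩
  mul_mem' := fun ⟨_, hg⟩ ⟨_, hh⟩ => ⟨_, hg.mul hh⟩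
  inv_mem' := fun ⟨_, hg⟩ => ⟨_, hg.inv⟩

variable (F W) in
/-- The vectors of `W` up to nonzero scalars, that is, the points of the projective space of `W`
together with the class of the zero vector. -/
def ScalarClass : Type _ := MulAction.orbitRel.Quotient Fˣ W

instance [Finite W] : Finite (ScalarClass F W) :=
  inferInstanceAs (Finite (Quotient _))

variable (F) in
/-- The class of a vector up to nonzero scalars. -/
def scalarClass (w : W) : ScalarClass F W := Quotient.mk _ w

theorem scalarClass_eq_iff {v w : W} : scalarClass F v = scalarClass F w ↔ ∃ u : Fˣ, u • w = v :=
  Quotient.eq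

instance : MulAction (semilinearGroup F W) (ScalarClass F W) where
  smul g := Quotient.map g.1 fun _ w ⟨u, hu⟩ => by
    obtain ⟨φ, hg⟩ := g.2
    exact ⟨Units.map (φ : F →* F) u, by rw [← hu]; exact (hg.map_units_smul u w).symm⟩
  one_smul := Quotient.ind fun _ => rfl
  mul_smul _ _ := Quotient.ind fun _ => rfl

theorem span_range_le_of_fiberCard_scalarClass_le {ι κ : Type*} [Finite ι] [Finite κ] {x : ι → W}
    {y : κ → W} (h : fiberCard (scalarClass F ∘ y) ≤ fiberCard (scalarClass F ∘ x)) :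
    Submodule.span F (Set.range y) ≤ Submodule.span F (Set.range x) := by
  rw [Submodule.span_le]
  rintro _ ⟨j, rfl⟩
  obtain ⟨i, hi⟩ := fiberCard_pos_iff.1
    ((fiberCard_pos_iff.2 ⟨j, rfl⟩).trans_le (h (scalarClass F (y j))))
  obtain ⟨u, hu⟩ := scalarClass_eq_iff.1 hi.symm
  rw [← hu]
  exact Submodule.smul_mem _ _ (Submodule.subset_span ⟨i, rfl⟩)

theorem orbitRel_fiberCard_scalarClass_iff {ι : Type*} [Finite ι] {x y : ι → W} :
    MulAction.orbitRel (semilinearGroup F W)ᵈᵐᵃ _ (fiberCard (scalarClass F ∘ x))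
        (fiberCard (scalarClass F ∘ y)) ↔
      ∃ (π : Equiv.Perm ι) (s : ι → Fˣ) (φ : F ≃+* F) (g : Equiv.Perm W),
        IsSemilinear φ g ∧ ∀ i, g (s i • x (π i)) = y i := by
  have hclass : MulAction.orbitRel (semilinearGroup F W)ᵈᵐᵃ _ (fiberCard (scalarClass F ∘ x))
        (fiberCard (scalarClass F ∘ y)) ↔ ∃ (g : semilinearGroup F W) (π : Equiv.Perm ι),
      ∀ i, scalarClass F (y i) = scalarClass F (g.1 (x (π i))) := by
    rw [Setoid.comm', MulAction.orbitRel_apply, MulAction.mem_orbit_iff,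
      (DomMulAct.mk.surjective.comp inv_surjective).exists]
    refine exists_congr fun g => ?_
    rw [Function.comp_apply, ← fiberCard_smul, fiberCard_eq_iff_exists_perm]
    exact exists_congr fun π => funext_iff.trans (forall_congr' fun i => eq_comm)
  rw [hclass]
  constructor
  · rintro ⟨⟨g, φ, hg⟩, π, hπ⟩
    choose u hu using fun i => scalarClass_eq_iff.1 (hπ i)
    refine ⟨π, fun i => Units.map (φ.symm : F →* F) (u i), φ, g, hg, fun i => ?_⟩
    rw [hg.map_units_smul, ← hu]
    congr 1
    ext
    simp
  · rintro ⟨π, s, φ, g, hg, hy⟩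
    refine ⟨⟨g, φ, hg⟩, π, fun i => scalarClass_eq_iff.2 ⟨Units.map (φ : F →* F) (s i), ?_⟩⟩
    rw [← hy, hg.map_units_smul]

end SemilinearMaps

section Codes

open Module

variable {F W ι : Type*} [Field F] [AddCommGroup W] [Module F W]

/-- The map `f ↦ (f (x i))ᵢ`: multiplication of a row vector `f` by the generator matrix with
columns `x i`. -/
def columnMap (x : ι → W) : Dual F W →ₗ[F] ι → F := LinearMap.pi fun i => Dual.eval F W (x i)

variable (F) in
/-- The code generated by a matrix with columns `x i`. -/
def columnCode (x : ι → W) : Submodule F (ι → F) := LinearMap.range (columnMap x)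

theorem map_funLeft_columnCode {κ : Type*} (π : κ → ι) (x : ι → W) :
    (columnCode F x).map (LinearMap.funLeft F F π) = columnCode F (x ∘ π) := by
  rw [columnCode, ← LinearMap.range_comp]
  rfl

theorem ker_columnMap (x : ι → W) :
    LinearMap.ker (columnMap x) = (Submodule.span F (Set.range x)).dualAnnihilator := by
  ext f
  rw [LinearMap.mem_ker, Submodule.mem_dualAnnihilator, funext_iff]
  exact ⟨fun h => Submodule.span_le (p := LinearMap.ker f).2 (Set.range_subset_iff.2 h),
    fun h i => h _ (Submodule.subset_span ⟨i, rfl⟩)⟩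

theorem columnMap_injective_iff {x : ι → W} :
    Function.Injective (columnMap (F := F) x) ↔ Submodule.span F (Set.range x) = ⊤ := by
  rw [← LinearMap.ker_eq_bot, ker_columnMap, Submodule.dualAnnihilator_eq_bot_iff]

variable [FiniteDimensional F W]

theorem finrank_columnCode_eq_iff {x : ι → W} :
    finrank F (columnCode F x) = finrank F W ↔ Submodule.span F (Set.range x) = ⊤ := by
  have hrank := LinearMap.finrank_range_add_finrank_ker (columnMap (F := F) x)
  rw [Subspace.dual_finrank_eq] at hrank
  rw [← columnMap_injective_iff, ← LinearMap.ker_eq_bot, ← Submodule.finrank_eq_zero (R := F),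
    columnCode]
  lia

theorem exists_columnCode_eq [Finite ι] {C : Submodule F (ι → F)}
    (hC : finrank F C = finrank F W) : ∃ x : ι → W, columnCode F x = C := by
  let e : Dual F W ≃ₗ[F] C := LinearEquiv.ofFinrankEq _ _ (Subspace.dual_finrank_eq.trans hC.symm)
  refine ⟨fun i => (evalEquiv F W).symm (LinearMap.proj i ∘ₗ C.subtype ∘ₗ e.toLinearMap), ?_⟩
  have hmap : columnMap (fun i => (evalEquiv F W).symm
      (LinearMap.proj i ∘ₗ C.subtype ∘ₗ e.toLinearMap)) = C.subtype ∘ₗ e.toLinearMap := by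
    ext f i
    exact apply_evalEquiv_symm_apply F W f _
  rw [columnCode, hmap, LinearMap.range_comp, LinearEquiv.range, Submodule.map_subtype_top]

theorem exists_linearEquiv_of_columnCode_eq {x y : ι → W}
    (hx : Submodule.span F (Set.range x) = ⊤) (hy : Submodule.span F (Set.range y) = ⊤)
    (h : columnCode F x = columnCode F y) : ∃ A : W ≃ₗ[F] W, ∀ i, A (x i) = y i := by
  let ex := LinearEquiv.ofInjective _ (columnMap_injective_iff.2 hx)
  let ey := LinearEquiv.ofInjective _ (columnMap_injective_iff.2 hy)
  let e : Dual F W ≃ₗ[F] Dual F W := (ey.trans (LinearEquiv.ofEq _ _ h.symm)).trans ex.symm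
  have he (f : Dual F W) : columnMap x (e f) = columnMap y f :=
    congrArg Subtype.val (ex.apply_symm_apply _)
  refine ⟨(evalEquiv F W).trans (e.dualMap.trans (evalEquiv F W).symm), fun i => ?_⟩
  apply (evalEquiv F W).injective
  rw [LinearEquiv.trans_apply, LinearEquiv.trans_apply, LinearEquiv.apply_symm_apply]
  ext f
  exact congrFun (he f) i

end Codes

section Isomorphism

open Module

variable {F : Type} {W : Type*} [Field F] [AddCommGroup W] [Module F W] {n : ℕ}

/-- Isomorphism of codes: equality up to permuting and scaling coordinates and applying a field
automorphism. -/
def CodeIso (C D : Submodule F (Fin n → F)) : Prop :=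
  ∃ (π : Equiv.Perm (Fin n)) (s : Fin n → Fˣ) (φ : F ≃+* F),
    codeMap π s φ '' (C : Set (Fin n → F)) = D

theorem codeIso_refl (C : Submodule F (Fin n → F)) : CodeIso C C := by
  refine ⟨1, 1, RingEquiv.refl F, ?_⟩
  have hid : codeMap 1 1 (RingEquiv.refl F) = (id : (Fin n → F) → Fin n → F) := by
    ext v i
    simp [codeMap]
  rw [hid, Set.image_id]

theorem IsSemilinear.codeMap_image_columnCode {φ : F ≃+* F} {g : Equiv.Perm W}
    (hg : IsSemilinear φ g) (π : Equiv.Perm (Fin n)) (s : Fin n → Fˣ) (x : Fin n → W) :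
    codeMap π s φ '' (columnCode F x : Set (Fin n → F)) =
      columnCode F fun i => g (s i • x (π i)) := by
  have hword (f f' : Dual F W) (hf : ∀ w, f' (g w) = φ (f w)) :
      codeMap π s φ (columnMap x f) = columnMap (fun i => g (s i • x (π i))) f' := by
    ext i
    exact (congrArg φ (f.map_smul _ _).symm).trans (hf _).symm
  ext v
  constructor
  · rintro ⟨_, ⟨f, rfl⟩, rfl⟩
    obtain ⟨f', hf⟩ := hg.exists_dual_apply_eq f
    exact ⟨f', (hword f f' hf).symm⟩
  · rintro ⟨f', rfl⟩
    obtain ⟨f, hf⟩ := hg.inv.exists_dual_apply_eq f'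
    refine ⟨_, ⟨f, rfl⟩, hword f f' fun w => ?_⟩
    rw [← φ.symm_apply_eq, ← hf]
    simp

theorem codeIso_columnCode_of_orbitRel {x y : Fin n → W}
    (h : MulAction.orbitRel (semilinearGroup F W)ᵈᵐᵃ _ (fiberCard (scalarClass F ∘ x))
      (fiberCard (scalarClass F ∘ y))) : CodeIso (columnCode F x) (columnCode F y) := by
  obtain ⟨π, s, φ, g, hg, hy⟩ := orbitRel_fiberCard_scalarClass_iff.1 h
  obtain rfl : (fun i => g (s i • x (π i))) = y := funext hy
  exact ⟨π, s, φ, hg.codeMap_image_columnCode π s x⟩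

theorem codeIso_columnCode_iff [FiniteDimensional F W] {x y : Fin n → W}
    (hy : Submodule.span F (Set.range y) = ⊤) :
    CodeIso (columnCode F x) (columnCode F y) ↔
      MulAction.orbitRel (semilinearGroup F W)ᵈᵐᵃ _ (fiberCard (scalarClass F ∘ x))
        (fiberCard (scalarClass F ∘ y)) := by
  refine ⟨fun ⟨π, s, φ, h⟩ => orbitRel_fiberCard_scalarClass_iff.2 ?_,
    codeIso_columnCode_of_orbitRel⟩
  obtain ⟨g, hg⟩ := exists_isSemilinear (W := W) φ
  have hcode : (columnCode F fun i => g (s i • x (π i))) = columnCode F y :=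
    SetLike.coe_injective ((hg.codeMap_image_columnCode π s x).symm.trans h)
  have hspan : Submodule.span F (Set.range fun i => g (s i • x (π i))) = ⊤ := by
    rwa [← finrank_columnCode_eq_iff, hcode, finrank_columnCode_eq_iff]
  obtain ⟨A, hA⟩ := exists_linearEquiv_of_columnCode_eq hspan hy hcode
  exact ⟨π, s, _, _, (IsSemilinear.of_linearEquiv A).mul hg, hA⟩

end Isomorphism

section CodeFamilies

open Module

theorem card_quot_eq_card_quotient {α β : Type*} {r : α → α → Prop} {s : Setoid β} (f : α → β)
    (hrel : ∀ a b, r a b ↔ s (f a) (f b)) (hsurj : ∀ b, ∃ a, s (f a) b) :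
    Nat.card (Quot r) = Nat.card (Quotient s) := by
  refine Nat.card_congr (.ofBijective (Quot.lift (fun a => ⟦f a⟧)
    fun a b h => Quotient.sound ((hrel a b).1 h)) ⟨?_, ?_⟩)
  · rintro ⟨a⟩ ⟨b⟩ h
    exact Quot.sound ((hrel a b).2 (Quotient.exact h))
  · rintro ⟨b⟩
    obtain ⟨a, ha⟩ := hsurj b
    exact ⟨Quot.mk _ a, Quotient.sound ha⟩

variable {F : Type} [Field F] {m : ℕ} {N : ∀ n : ℕ, Set (Submodule F (Fin n → F))}

/-- A family of sets of codes of dimension `m`, one for each length, closed under isomorphism and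
under dimension-preserving puncturing. -/
structure IsPunctureClosed (m : ℕ) (N : ∀ n : ℕ, Set (Submodule F (Fin n → F))) : Prop where
  finrank_eq {n : ℕ} {C : Submodule F (Fin n → F)} : C ∈ N n → finrank F C = m
  mem_of_codeIso {n : ℕ} {C D : Submodule F (Fin n → F)} : C ∈ N n → CodeIso C D → D ∈ N n
  map_funLeft_mem {n' n : ℕ} {π : Fin n' → Fin n} {C : Submodule F (Fin n → F)} :
    Function.Injective π → C ∈ N n → finrank F (C.map (LinearMap.funLeft F F π)) = m →
      C.map (LinearMap.funLeft F F π) ∈ N n'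

variable {W : Type*} [AddCommGroup W] [Module F W]

namespace IsPunctureClosed

/-- The column multiplicities, up to scalars, of the generator matrices of the codes in a
puncture-closed family, as a set invariant under semilinear changes of the columns. -/
def columnMultiplicities (hN : IsPunctureClosed m N) (W : Type*) [AddCommGroup W] [Module F W] :
    SubMulAction (semilinearGroup F W)ᵈᵐᵃ (ScalarClass F W → ℕ) where
  carrier := {μ | ∃ (n : ℕ) (x : Fin n → W),
    columnCode F x ∈ N n ∧ fiberCard (scalarClass F ∘ x) = μ}
  smul_mem' := by
    rintro c _ ⟨n, x, hx, rfl⟩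
    let g := (DomMulAct.mk.symm c)⁻¹
    have hg : fiberCard (scalarClass F ∘ fun i => g.1 (x i)) =
        c • fiberCard (scalarClass F ∘ x) := by
      rw [← DomMulAct.mk.apply_symm_apply c, ← inv_inv (DomMulAct.mk.symm c), ← fiberCard_smul]
      rfl
    refine ⟨n, _, hN.mem_of_codeIso hx (codeIso_columnCode_of_orbitRel ?_), hg⟩
    rw [hg, Setoid.comm']
    exact ⟨c, rfl⟩

variable [FiniteDimensional F W]

theorem ordConnected_columnMultiplicities (hN : IsPunctureClosed (finrank F W) N) :
    (hN.columnMultiplicities W : Set (ScalarClass F W → ℕ)).OrdConnected := by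
  refine ⟨?_⟩
  rintro _ ⟨k, z, hz, rfl⟩ _ ⟨n, x, hx, rfl⟩ μ ⟨hzμ, hμx⟩
  obtain ⟨l, π, hπ, hμ⟩ := exists_injective_fiberCard_comp_eq hμx
  have hspan : Submodule.span F (Set.range (x ∘ π)) = ⊤ := by
    rw [← top_le_iff, ← finrank_columnCode_eq_iff.1 (hN.finrank_eq hz)]
    exact span_range_le_of_fiberCard_scalarClass_le (hzμ.trans_eq hμ.symm)
  refine ⟨l, x ∘ π, ?_, hμ⟩
  rw [← map_funLeft_columnCode]
  refine hN.map_funLeft_mem hπ hx ?_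
  rw [map_funLeft_columnCode, finrank_columnCode_eq_iff, hspan]

theorem card_quot_codeIso_eq [Fintype (ScalarClass F W)] (hN : IsPunctureClosed (finrank F W) N)
    (n : ℕ) :
    Nat.card (Quot fun C D : {C : Submodule F (Fin n → F) // C ∈ N n} => CodeIso C.1 D.1) =
      Nat.card (MulAction.orbitRel.Quotient (semilinearGroup F W)ᵈᵐᵃ
        (sumLevel (hN.columnMultiplicities W) n)) := by
  choose x hx using fun C : {C : Submodule F (Fin n → F) // C ∈ N n} =>
    exists_columnCode_eq (hN.finrank_eq C.2)
  have hspan (C) : Submodule.span F (Set.range (x C)) = ⊤ := by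
    rw [← finrank_columnCode_eq_iff, hx, hN.finrank_eq C.2]
  let f (C : {C // C ∈ N n}) : sumLevel (hN.columnMultiplicities W) n :=
    ⟨fiberCard (scalarClass F ∘ x C), ⟨n, x C, (hx C).symm ▸ C.2, rfl⟩,
      (sum_fiberCard _).trans (Fintype.card_fin n)⟩
  refine card_quot_eq_card_quotient f (fun C D => ?_) fun b => ?_
  · rw [SubMulAction.orbitRel_of_subMul, Setoid.comap_rel, ← codeIso_columnCode_iff (hspan D),
      hx, hx]
  · obtain ⟨_, ⟨l, y, hy, rfl⟩, hn⟩ := b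
    obtain rfl : l = n := by rw [← hn, sum_fiberCard, Fintype.card_fin]
    have hyspan := finrank_columnCode_eq_iff.1 (hN.finrank_eq hy)
    refine ⟨⟨columnCode F y, hy⟩, ?_⟩
    rw [SubMulAction.orbitRel_of_subMul, Setoid.comap_rel, ← codeIso_columnCode_iff hyspan, hx]
    exact codeIso_refl _

end IsPunctureClosed

end CodeFamilies

/-- Counting linear codes: fix a finite field `F` (of prime power order `q`) and `m ∈ ℕ`.
If `N n` is a family of sets of `m`-dimensional codes of length `n` over `F`, stable under
coordinate permutations, coordinate scalings and field automorphisms, and closed under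
puncturing (when the dimension does not drop), then the number of isomorphism classes of
codes in `N n` is a quasipolynomial in `n` for `n ≫ 0`. -/
theorem quasipolynomial_count_of_linear_codes
    (F : Type) [Field F] [Fintype F] (m : ℕ)
    (N : ∀ n : ℕ, Set (Submodule F (Fin n → F)))
    (hdim : ∀ n : ℕ, ∀ C ∈ N n, Module.finrank F C = m)
    (hstable : ∀ (n : ℕ) (π : Equiv.Perm (Fin n)) (s : Fin n → Fˣ) (φ : F ≃+* F),
      ∀ C ∈ N n, ∃ D ∈ N n, (D : Set (Fin n → F)) = codeMap π s φ '' (C : Set (Fin n → F)))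
    (hpuncture : ∀ (n' n : ℕ) (π : Fin n' → Fin n), Function.Injective π →
      ∀ C ∈ N n, Module.finrank F (Submodule.map (LinearMap.funLeft F F π) C) = m →
        Submodule.map (LinearMap.funLeft F F π) C ∈ N n') :
    QuasiPolynomialCount (fun n =>
      Nat.card (Quot (fun (C D : {C : Submodule F (Fin n → F) // C ∈ N n}) =>
        ∃ (π : Equiv.Perm (Fin n)) (s : Fin n → Fˣ) (φ : F ≃+* F),
          codeMap π s φ '' (C.1 : Set (Fin n → F)) = (D.1 : Set (Fin n → F))))) := by
  have hN : IsPunctureClosed (Module.finrank F (Fin m → F)) N := by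
    rw [Module.finrank_fin_fun]
    refine ⟨hdim _ _, fun {n C D} hC ⟨π, s, φ, hD⟩ => ?_, fun hπ => hpuncture _ _ _ hπ _⟩
    obtain ⟨D', hD', h⟩ := hstable n π s φ C hC
    rwa [← SetLike.coe_injective (h.trans hD)]
  have := Fintype.ofFinite (ScalarClass F (Fin m → F))
  have hcount := card_orbits_sumLevel_mem_eventuallyQuasiPolynomial
    hN.ordConnected_columnMultiplicities
  simp only [← hN.card_quot_codeIso_eq] at hcount
  exact quasiPolynomialCount_of_mem_eventuallyQuasiPolynomial hcount
end

section
/- Let (I_n)_{n∈ℕ} be a symmetric wide-matrix ideal chain over a Noetherian commutative ring K. For any injection π : [m] → [n], the K-algebra map A_m → A_n defined by x_{i,j} ↦ x_{i,π(j)} sends I_m into I_n and hence induces a K-algebra homomorphism A_m/I_m → A_n/I_n. Then there exists n_0 ∈ ℕ such that for all m, n with n_0 ≤ m ≤ n and every injection π : [m] → [n], the induced homomorphism A_m/I_m → A_n/I_n is injective. -/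
open MvPolynomial

/-!
Let `J_k` be the union of the preimages of the ideals `I_n` under all injections `[k] → [n]`. Any
two injections into `[n]` differ by a permutation, so these preimages depend only on `n` and
increase with it; as `A_k` is Noetherian, `J_k` is already the preimage of `I_n` for every large
`n`. How large depends on `k`, and the point is to remove this dependence. The family `J` is
stable under increasing injections, so by Higman's lemma and the ascending chain condition for
ideals of leading coefficients it is generated by the images of `J_k` for `k` below some bound
`d`. Hence `J_n = I_n` once `n` is large for each of the finitely many `k ≤ d`, and this equality
says that all transition maps out of `A_n / I_n` are injective.
-/

namespace WideMatrix

section WellQuasiOrder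

theorem exists_orderEmbedding_get_of_sublistForall₂ {α β : Type*} {r : α → β → Prop}
    {l₁ : List α} {l₂ : List β} (h : l₁.SublistForall₂ r l₂) :
    ∃ e : Fin l₁.length ↪o Fin l₂.length, ∀ i, r (l₁.get i) (l₂.get (e i)) := by
  obtain ⟨l, hrel, hsub⟩ := List.sublistForall₂_iff.1 h
  obtain ⟨e, he⟩ := List.sublist_iff_exists_fin_orderEmbedding_get_eq.1 hsub
  refine ⟨(Fin.castOrderIso hrel.length_eq).toOrderEmbedding.trans e, fun i => ?_⟩
  have hi := hrel.get i.2 (hrel.length_eq ▸ i.2)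
  rwa [he] at hi

theorem wellQuasiOrdered_tuple (α : Type*) [Preorder α] [WellQuasiOrderedLE α] :
    WellQuasiOrdered fun x y : Σ n, Fin n → α =>
      ∃ e : Fin x.1 ↪o Fin y.1, ∀ j, x.2 j ≤ y.2 (e j) := by
  have higman : WellQuasiOrdered (List.SublistForall₂ ((· ≤ ·) : α → α → Prop)) := by
    rw [← Set.partiallyWellOrderedOn_univ_iff]
    simpa only [Set.mem_univ, implies_true, Set.ofPred_true] using
      Set.PartiallyWellOrderedOn.partiallyWellOrderedOn_sublistForall₂ (· ≤ ·)
        (Set.partiallyWellOrderedOn_univ_iff.2 (wellQuasiOrdered_le (α := α)))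
  exact higman.of_surjective
    ⟨List.equivSigmaTuple, exists_orderEmbedding_get_of_sublistForall₂⟩
    List.equivSigmaTuple.surjective

theorem exists_height_bound_of_wellQuasiOrdered {α β : Type*} {r : α → α → Prop} [IsPreorder α r]
    (hr : WellQuasiOrdered r) [PartialOrder β] [WellFoundedGT β] {L : α → β}
    (hL : ∀ x y, r x y → L x ≤ L y) (height : α → ℕ) :
    ∃ d, ∀ y, ∃ x, height x ≤ d ∧ r x y ∧ L y ≤ L x := by
  by_contra! hbad
  choose y hy using hbad
  obtain ⟨g, hg⟩ := hr.exists_monotone_subseq y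
  obtain ⟨a, ha⟩ := WellFoundedGT.monotone_chain_condition
    (⟨fun i => L (y (g i)), fun i j hij => hL _ _ (hg i j hij)⟩ : ℕ →o β)
  let b := max a (height (y (g a)))
  have hheight : height (y (g a)) ≤ g b := (le_max_right _ _).trans (g.strictMono.id_le b)
  exact hy (g b) (y (g a)) hheight (hg a b (le_max_left _ _)) (ha b (le_max_left _ _)).ge

end WellQuasiOrder

section MapDomain

theorem mapDomain_le_of_injective {α β M : Type*} [AddCommMonoid M] [PartialOrder M]
    [CanonicallyOrderedAdd M] {e : α → β} (he : Function.Injective e) {u : α →₀ M} {v : β →₀ M}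
    (h : ∀ a, u a ≤ v (e a)) :
    u.mapDomain e ≤ v := fun b => by
  by_cases hb : b ∈ Set.range e
  · obtain ⟨a, rfl⟩ := hb
    exact (Finsupp.mapDomain_apply he u a).trans_le (h a)
  · exact (Finsupp.mapDomain_of_notMem_range u b hb).trans_le (zero_le (a := v b))

theorem toLex_mapDomain_le {α β M : Type*} [LinearOrder α] [LinearOrder β] [AddCommMonoid M]
    [PartialOrder M] {e : α → β} (he : StrictMono e) {u v : α →₀ M} (h : toLex u ≤ toLex v) :
    toLex (u.mapDomain e) ≤ toLex (v.mapDomain e) := by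
  obtain heq | hlt := h.eq_or_lt
  · rw [toLex.injective heq]
  obtain ⟨a, hbefore, hat⟩ := Finsupp.Lex.lt_iff.1 hlt
  refine le_of_lt (Finsupp.Lex.lt_iff.2 ⟨e a, fun b hb => ?_, ?_⟩)
  · by_cases hrange : b ∈ Set.range e
    · obtain ⟨a', rfl⟩ := hrange
      simpa only [ofLex_toLex, Finsupp.mapDomain_apply he.injective] using
        hbefore a' (he.lt_iff_lt.1 hb)
    · simp only [ofLex_toLex, Finsupp.mapDomain_of_notMem_range _ _ hrange]
  · simpa only [ofLex_toLex, Finsupp.mapDomain_apply he.injective] using hat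

end MapDomain

section LeadingCoeffIdeal

open scoped MonomialOrder

section Semiring

variable {σ τ R : Type*} [CommSemiring R]

/-- The ideal of coefficients at `d` of those elements of `I` all of whose monomials are at most
`d`; this is the multivariate analogue of `Ideal.leadingCoeffNth`. -/
def leadingCoeffIdeal (m : MonomialOrder σ) (I : Ideal (MvPolynomial σ R)) (d : σ →₀ ℕ) :
    Ideal R where
  carrier := {a | ∃ f ∈ I, m.degree f ≼[m] d ∧ coeff d f = a}
  zero_mem' := ⟨0, zero_mem _, by simp, coeff_zero d⟩
  add_mem' := by
    rintro _ _ ⟨f, hf, hfd, rfl⟩ ⟨g, hg, hgd, rfl⟩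
    exact ⟨f + g, add_mem hf hg, m.degree_add_le.trans (sup_le hfd hgd), coeff_add d f g⟩
  smul_mem' := by
    rintro a _ ⟨f, hf, hfd, rfl⟩
    exact ⟨a • f, Submodule.smul_of_tower_mem I a hf, m.degree_smul_le.trans hfd, coeff_smul d a f⟩

theorem mem_leadingCoeffIdeal {m : MonomialOrder σ} {I : Ideal (MvPolynomial σ R)} {d : σ →₀ ℕ}
    {a : R} : a ∈ leadingCoeffIdeal m I d ↔ ∃ f ∈ I, m.degree f ≼[m] d ∧ coeff d f = a :=
  Iff.rfl

theorem leadingCoeffIdeal_mono_exponent (m : MonomialOrder σ) (I : Ideal (MvPolynomial σ R)) :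
    Monotone (leadingCoeffIdeal m I) := by
  rintro u v huv _ ⟨f, hf, hfu, rfl⟩
  refine ⟨monomial (v - u) 1 * f, I.mul_mem_left _ hf, ?_, ?_⟩
  · calc m.toSyn (m.degree (monomial (v - u) 1 * f))
        ≤ m.toSyn (m.degree (monomial (v - u) (1 : R))) + m.toSyn (m.degree f) :=
          m.toSyn_degree_mul_le
      _ ≤ m.toSyn (v - u) + m.toSyn u := add_le_add (m.degree_monomial_le 1) hfu
      _ = m.toSyn v := by rw [← map_add, tsub_add_cancel_of_le huv]
  · nth_rw 1 [← tsub_add_cancel_of_le huv]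
    rw [coeff_monomial_mul, one_mul]

theorem leadingCoeffIdeal_le_rename {m : MonomialOrder σ} {m' : MonomialOrder τ} {e : σ → τ}
    (he : Function.Injective e)
    (hmono : ∀ u v, u ≼[m] v → u.mapDomain e ≼[m'] v.mapDomain e)
    {I : Ideal (MvPolynomial σ R)} {J : Ideal (MvPolynomial τ R)}
    (hIJ : I ≤ J.comap (rename e)) (u : σ →₀ ℕ) :
    leadingCoeffIdeal m I u ≤ leadingCoeffIdeal m' J (u.mapDomain e) := by
  rintro _ ⟨f, hf, hfu, rfl⟩
  refine ⟨rename e f, hIJ hf, m'.degree_le_iff.2 fun w hw => ?_, coeff_rename_mapDomain e he f u⟩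
  obtain ⟨v, rfl, hv⟩ := coeff_rename_ne_zero e f w (mem_support_iff.1 hw)
  exact hmono v u (m.degree_le_iff.1 hfu v (mem_support_iff.2 hv))

end Semiring

section Ring

variable {σ R : Type*} [CommRing R]

theorem degree_sub_lt_of_coeff_eq (m : MonomialOrder σ) {f g : MvPolynomial σ R}
    (hg : m.degree g ≼[m] m.degree f) (hcoeff : coeff (m.degree f) g = coeff (m.degree f) f)
    (hne : f - g ≠ 0) : m.degree (f - g) ≺[m] m.degree f := by
  refine lt_of_le_of_ne (m.degree_sub_le.trans (sup_le le_rfl hg)) fun heq => ?_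
  apply m.coeff_degree_ne_zero_iff.2 hne
  rw [m.toSyn.injective heq, coeff_sub, hcoeff, sub_self]

theorem eq_of_leadingCoeffIdeal_le (m : MonomialOrder σ) {I J : Ideal (MvPolynomial σ R)}
    (hIJ : I ≤ J) (hlead : ∀ d, leadingCoeffIdeal m J d ≤ leadingCoeffIdeal m I d) : I = J := by
  refine le_antisymm hIJ fun f hf => ?_
  induction hd : m.toSyn (m.degree f) using WellFoundedLT.induction generalizing f with
  | ind d ih =>
    subst hd
    obtain ⟨g, hg, hdeg, hcoeff⟩ :=
      mem_leadingCoeffIdeal.1 (hlead (m.degree f) ⟨f, hf, le_rfl, rfl⟩)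
    have hsub : f - g ∈ I := by
      by_cases hne : f - g = 0
      · exact hne ▸ zero_mem I
      · exact ih _ (degree_sub_lt_of_coeff_eq m hdeg hcoeff hne) _ (sub_mem hf (hIJ hg)) rfl
    exact (Submodule.sub_mem_iff_left I hg).1 hsub

end Ring

end LeadingCoeffIdeal

section OI

variable {ι K : Type*} [CommRing K]

/-- The lexicographic monomial order on the variables `x_{i,j}`, themselves ordered
lexicographically, row index first. -/
noncomputable def rowLex (ι : Type*) [Finite ι] [LinearOrder ι] (n : ℕ) :
    MonomialOrder (ι × Fin n) :=
  have : Finite (ι ×ₗ Fin n) := .of_equiv _ toLex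
  { syn := Lex ((ι ×ₗ Fin n) →₀ ℕ)
    toSyn := (Finsupp.domCongr toLex).trans MonomialOrder.lex.toSyn
    toSyn_monotone := fun _ _ h => MonomialOrder.lex.toSyn_monotone fun p => h (ofLex p) }

open scoped MonomialOrder in
theorem rowLex_le_iff [Finite ι] [LinearOrder ι] {n : ℕ} {u v : ι × Fin n →₀ ℕ} :
    u ≼[rowLex ι n] v ↔
      toLex (u.mapDomain (toLex : _ → ι ×ₗ Fin n)) ≤
        toLex (v.mapDomain (toLex : _ → ι ×ₗ Fin n)) := by
  simp only [← Finsupp.equivMapDomain_eq_mapDomain]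
  rfl

open scoped MonomialOrder in
theorem rowLex_mapDomain_le [Finite ι] [LinearOrder ι] {m n : ℕ} {σ : Fin m → Fin n}
    (hσ : StrictMono σ) (u v : ι × Fin m →₀ ℕ) (h : u ≼[rowLex ι m] v) :
    u.mapDomain (Prod.map id σ) ≼[rowLex ι n] v.mapDomain (Prod.map id σ) := by
  have hstrict : StrictMono fun p : ι ×ₗ Fin m => toLex (Prod.map id σ (ofLex p)) := fun p q hpq =>
    Prod.Lex.toLex_lt_toLex.2 <| (Prod.Lex.lt_iff.1 hpq).imp_right fun h => ⟨h.1, hσ h.2⟩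
  rw [rowLex_le_iff] at h ⊢
  simpa only [← Finsupp.mapDomain_comp] using! toLex_mapDomain_le hstrict h

/-- The substitution `x_{i,j} ↦ x_{i,π(j)}` from `A_m` to `A_n`. -/
noncomputable abbrev renameColumns {m n : ℕ} (π : Fin m → Fin n) :
    MvPolynomial (ι × Fin m) K →ₐ[K] MvPolynomial (ι × Fin n) K :=
  rename (Prod.map id π)

/-- A family of ideals of the rings `A_n` is OI-stable if it is preserved by the substitutions
`x_{i,j} ↦ x_{i,σ(j)}` for increasing `σ`. -/
def IsOIStable (I : ∀ n, Ideal (MvPolynomial (ι × Fin n) K)) : Prop :=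
  ∀ ⦃m n : ℕ⦄ (σ : Fin m ↪o Fin n), I m ≤ (I n).comap (renameColumns σ)

/-- OI-divisibility of monomials `(n, u)`, where `u` is the exponent of a monomial of `A_n`: some
increasing substitution of columns turns the first into a divisor of the second. -/
def OIDivides (x y : Σ n, ι × Fin n →₀ ℕ) : Prop :=
  ∃ σ : Fin x.1 ↪o Fin y.1, x.2.mapDomain (Prod.map id σ) ≤ y.2

instance : IsPreorder (Σ n, ι × Fin n →₀ ℕ) OIDivides where
  refl x := ⟨RelEmbedding.refl _, (Finsupp.mapDomain_id (v := x.2)).le⟩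
  trans x y z := by
    rintro ⟨σ, hσ⟩ ⟨τ, hτ⟩
    refine ⟨σ.trans τ, ?_⟩
    calc x.2.mapDomain (Prod.map id (σ.trans τ))
        = (x.2.mapDomain (Prod.map id σ)).mapDomain (Prod.map id τ) := by
          rw [← Finsupp.mapDomain_comp, Prod.map_comp_map, Function.id_comp]
          rfl
      _ ≤ y.2.mapDomain (Prod.map id τ) := Finsupp.mapDomain_mono hσ
      _ ≤ z.2 := hτ

theorem wellQuasiOrdered_oiDivides [Finite ι] :
    WellQuasiOrdered (OIDivides : (Σ n, ι × Fin n →₀ ℕ) → (Σ n, ι × Fin n →₀ ℕ) → Prop) := by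
  intro x
  obtain ⟨k, l, hkl, σ, hσ⟩ :=
    wellQuasiOrdered_tuple (ι → ℕ) fun k => ⟨(x k).1, fun j i => (x k).2 (i, j)⟩
  exact ⟨k, l, hkl, σ, mapDomain_le_of_injective (Function.injective_id.prodMap σ.injective)
    fun p => hσ p.2 p.1⟩

theorem leadingCoeffIdeal_rowLex_le [Finite ι] [LinearOrder ι] {m n : ℕ} {σ : Fin m ↪o Fin n}
    {I : Ideal (MvPolynomial (ι × Fin m) K)} {J : Ideal (MvPolynomial (ι × Fin n) K)}
    (hIJ : I ≤ J.comap (renameColumns σ)) {u : ι × Fin m →₀ ℕ} {v : ι × Fin n →₀ ℕ}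
    (huv : u.mapDomain (Prod.map id σ) ≤ v) :
    leadingCoeffIdeal (rowLex ι m) I u ≤ leadingCoeffIdeal (rowLex ι n) J v :=
  (leadingCoeffIdeal_le_rename (Function.injective_id.prodMap σ.injective)
    (rowLex_mapDomain_le σ.strictMono) hIJ u).trans (leadingCoeffIdeal_mono_exponent _ J huv)

theorem IsOIStable.exists_generation_bound [Finite ι] [IsNoetherianRing K]
    {I : ∀ n, Ideal (MvPolynomial (ι × Fin n) K)} (hI : IsOIStable I) :
    ∃ d, ∀ n, ⨆ k ≤ d, ⨆ σ : Fin k ↪o Fin n, (I k).map (renameColumns σ) = I n := by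
  obtain ⟨_, _⟩ := exists_wellFoundedLT ι
  obtain ⟨d, hd⟩ := exists_height_bound_of_wellQuasiOrdered wellQuasiOrdered_oiDivides
    (L := fun x => leadingCoeffIdeal (rowLex ι x.1) (I x.1) x.2)
    (fun _ _ ⟨σ, hσ⟩ => leadingCoeffIdeal_rowLex_le (hI σ) hσ) Sigma.fst
  refine ⟨d, fun n => eq_of_leadingCoeffIdeal_le (rowLex ι n)
    (iSup₂_le fun k _ => iSup_le fun σ => Ideal.map_le_iff_le_comap.2 (hI σ)) fun v => ?_⟩
  obtain ⟨⟨k, u⟩, hk, ⟨σ, hσ⟩, hle⟩ := hd ⟨n, v⟩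
  have hgen : (I k).map (renameColumns σ) ≤
      ⨆ k ≤ d, ⨆ σ : Fin k ↪o Fin n, (I k).map (renameColumns σ) :=
    le_iSup₂_of_le k hk (le_iSup (fun σ : Fin k ↪o Fin n => (I k).map (renameColumns σ)) σ)
  exact hle.trans (leadingCoeffIdeal_rowLex_le (Ideal.map_le_iff_le_comap.1 hgen) hσ)

end OI

section FI

variable {ι K : Type*} [CommRing K] {I : ∀ n, Ideal (MvPolynomial (ι × Fin n) K)}

/-- A family of ideals of the rings `A_n` is FI-stable if it is preserved by the substitutions
`x_{i,j} ↦ x_{i,π(j)}` for injective `π`. -/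
def IsFIStable (I : ∀ n, Ideal (MvPolynomial (ι × Fin n) K)) : Prop :=
  ∀ ⦃m n : ℕ⦄ (π : Fin m ↪ Fin n), I m ≤ (I n).comap (renameColumns π)

theorem comap_renameColumns_comp {k m n : ℕ} (σ : Fin k → Fin m) (τ : Fin m → Fin n)
    (J : Ideal (MvPolynomial (ι × Fin n) K)) :
    J.comap (renameColumns (τ ∘ σ)) = (J.comap (renameColumns τ)).comap (renameColumns σ) := by
  ext f
  simp only [Ideal.mem_comap, rename_rename, Prod.map_comp_map, Function.id_comp]

theorem exists_perm_comp_eq {α β : Type*} [Finite α] (f g : α ↪ β) :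
    ∃ τ : Equiv.Perm β, ⇑τ ∘ f = g := by
  obtain ⟨τ, hτ⟩ := Equiv.Perm.exists_extending_pair f g f.injective g.injective
  exact ⟨τ, funext hτ⟩

theorem isFIStable_of_symmetric_chain
    (hsym : ∀ (n : ℕ) (π : Equiv.Perm (Fin n)), (I n).map (renameColumns π) ≤ I n)
    (hincl : ∀ n : ℕ, (I n).map (renameColumns Fin.castSucc) ≤ I (n + 1)) : IsFIStable I := by
  have hcastLE {m n : ℕ} (h : m ≤ n) : I m ≤ (I n).comap (renameColumns (Fin.castLE h)) := by
    induction n, h using Nat.le_induction with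
    | base =>
      intro f hf
      have hid : renameColumns (Fin.castLE le_rfl) f = f := by simp [renameColumns]
      rwa [Ideal.mem_comap, hid]
    | succ n h ih =>
      have hcomp : Fin.castLE (h.trans n.le_succ) = Fin.castSucc ∘ Fin.castLE h := rfl
      rw [hcomp, comap_renameColumns_comp]
      exact ih.trans (Ideal.comap_mono (Ideal.map_le_iff_le_comap.1 (hincl n)))
  intro m n π
  have hmn : m ≤ n := by simpa using Fintype.card_le_of_embedding π
  obtain ⟨τ, hτ⟩ := exists_perm_comp_eq (Fin.castLEEmb hmn) π
  rw [← hτ, comap_renameColumns_comp]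
  exact (hcastLE hmn).trans (Ideal.comap_mono (Ideal.map_le_iff_le_comap.1 (hsym n τ)))

theorem IsFIStable.comap_le_comap (hI : IsFIStable I) {k m n : ℕ} (hmn : m ≤ n)
    (σ : Fin k ↪ Fin m) (ρ : Fin k ↪ Fin n) :
    (I m).comap (renameColumns σ) ≤ (I n).comap (renameColumns ρ) := by
  obtain ⟨τ, hτ⟩ := exists_perm_comp_eq (σ.trans (Fin.castLEEmb hmn)) ρ
  have hρ : ⇑ρ = ⇑((Fin.castLEEmb hmn).trans τ.toEmbedding) ∘ σ := hτ.symm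
  rw [hρ, comap_renameColumns_comp]
  exact Ideal.comap_mono (hI _)

/-- The saturation of a chain: `fiSaturation I k` gathers all polynomials of `A_k` that fall into
the chain after some injective substitution of columns. -/
noncomputable def fiSaturation (I : ∀ n, Ideal (MvPolynomial (ι × Fin n) K)) (k : ℕ) :
    Ideal (MvPolynomial (ι × Fin k) K) :=
  ⨆ (n : ℕ) (π : Fin k ↪ Fin n), (I n).comap (renameColumns π)

theorem comap_le_fiSaturation {k n : ℕ} (π : Fin k ↪ Fin n) :
    (I n).comap (renameColumns π) ≤ fiSaturation I k :=
  le_iSup₂ (f := fun n (π : Fin k ↪ Fin n) => (I n).comap (renameColumns π)) n π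

theorem IsFIStable.exists_fiSaturation_le_comap [Finite ι] [IsNoetherianRing K]
    (hI : IsFIStable I) (k : ℕ) :
    ∃ N, ∀ n, N ≤ n → ∀ ρ : Fin k ↪ Fin n, fiSaturation I k ≤ (I n).comap (renameColumns ρ) := by
  let stage : ℕ →o Ideal (MvPolynomial (ι × Fin k) K) :=
    ⟨fun N => (I (k + N)).comap (renameColumns (Fin.castAddEmb N)),
      fun _ _ h => hI.comap_le_comap (Nat.add_le_add_left h k) _ _⟩
  obtain ⟨N, hN⟩ := WellFoundedGT.monotone_chain_condition stage
  refine ⟨k + N, fun n hn ρ => iSup₂_le fun m π => ?_⟩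
  calc (I m).comap (renameColumns π)
      ≤ stage (max N m) := hI.comap_le_comap (le_add_left (le_max_right N m)) _ _
    _ = stage N := (hN _ (le_max_left N m)).symm
    _ ≤ (I n).comap (renameColumns ρ) := hI.comap_le_comap hn _ _

theorem IsFIStable.isOIStable_fiSaturation [Finite ι] [IsNoetherianRing K] (hI : IsFIStable I) :
    IsOIStable (fiSaturation I) := by
  intro m n σ
  obtain ⟨N, hN⟩ := hI.exists_fiSaturation_le_comap m
  let inclusion := Fin.castLEEmb (le_max_right N n)
  calc fiSaturation I m
      ≤ (I (max N n)).comap (renameColumns (σ.toEmbedding.trans inclusion)) :=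
        hN _ (le_max_left N n) _
    _ = ((I (max N n)).comap (renameColumns inclusion)).comap (renameColumns σ) :=
        comap_renameColumns_comp σ inclusion _
    _ ≤ (fiSaturation I n).comap (renameColumns σ) := Ideal.comap_mono (comap_le_fiSaturation _)

theorem IsFIStable.exists_fiSaturation_le [Finite ι] [IsNoetherianRing K] (hI : IsFIStable I) :
    ∃ n₀, ∀ n, n₀ ≤ n → fiSaturation I n ≤ I n := by
  obtain ⟨d, hd⟩ := hI.isOIStable_fiSaturation.exists_generation_bound
  choose N hN using hI.exists_fiSaturation_le_comap
  refine ⟨(Finset.Iic d).sup N, fun n hn => (hd n).ge.trans ?_⟩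
  refine iSup₂_le fun k hk => iSup_le fun σ => Ideal.map_le_iff_le_comap.2 ?_
  exact hN k n ((Finset.le_sup (Finset.mem_Iic.2 hk)).trans hn) σ.toEmbedding

end FI

end WideMatrix

theorem wide_matrix_chain_eventually_injective_transition_maps_general
    {K ι : Type*} [CommRing K] [IsNoetherianRing K] [Finite ι]
    (I : ∀ n : ℕ, Ideal (MvPolynomial (ι × Fin n) K))
    (hsym : ∀ (n : ℕ) (π : Equiv.Perm (Fin n)),
      Ideal.map (rename (Prod.map (id : ι → ι) π)) (I n) ≤ I n)
    (hincl : ∀ n : ℕ,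
      Ideal.map (rename (Prod.map (id : ι → ι) (Fin.castSucc : Fin n → Fin (n + 1))))
        (I n) ≤ I (n + 1)) :
    (∀ (m n : ℕ) (π : Fin m → Fin n), Function.Injective π →
      Ideal.map (rename (Prod.map (id : ι → ι) π)) (I m) ≤ I n) ∧
    ∃ n₀ : ℕ, ∀ (m n : ℕ), n₀ ≤ m → ∀ (π : Fin m → Fin n), Function.Injective π →
      ∀ h : I m ≤ Ideal.comap ((rename (Prod.map (id : ι → ι) π)).toRingHom) (I n),
        Function.Injective
          (Ideal.quotientMap (I n) ((rename (Prod.map (id : ι → ι) π)).toRingHom) h) := by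
  have hI := WideMatrix.isFIStable_of_symmetric_chain hsym hincl
  refine ⟨fun m n π hπ => Ideal.map_le_iff_le_comap.2 (hI ⟨π, hπ⟩), ?_⟩
  obtain ⟨n₀, hn₀⟩ := hI.exists_fiSaturation_le
  exact ⟨n₀, fun m n hm π hπ h => Ideal.quotientMap_injective'
    ((WideMatrix.comap_le_fiSaturation ⟨π, hπ⟩).trans (hn₀ m hm))⟩

/-- For a symmetric wide-matrix ideal chain `(I n)` over a Noetherian ring `K`, every
injection `π : [m] → [n]` maps `I m` into `I n`, and there is an `n₀` such that for all
`n₀ ≤ m ≤ n` and every injection `π : [m] → [n]` the induced homomorphism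
`A_m/I_m → A_n/I_n` is injective. -/
theorem wide_matrix_chain_eventually_injective_transition_maps
    (K : Type) [CommRing K] [IsNoetherianRing K] (c : ℕ)
    (I : ∀ n : ℕ, Ideal (MvPolynomial (Fin c × Fin n) K))
    (hsym : ∀ (n : ℕ) (π : Equiv.Perm (Fin n)),
      Ideal.map (rename (Prod.map (id : Fin c → Fin c) π)) (I n) = I n)
    (hincl : ∀ n : ℕ,
      Ideal.map (rename (Prod.map (id : Fin c → Fin c) (Fin.castSucc : Fin n → Fin (n + 1))))
        (I n) ≤ I (n + 1)) :
    (∀ (m n : ℕ) (π : Fin m → Fin n), Function.Injective π →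
      Ideal.map (rename (Prod.map (id : Fin c → Fin c) π)) (I m) ≤ I n) ∧
    ∃ n₀ : ℕ, ∀ (m n : ℕ), n₀ ≤ m → m ≤ n → ∀ (π : Fin m → Fin n), Function.Injective π →
      ∀ h : I m ≤ Ideal.comap ((rename (Prod.map (id : Fin c → Fin c) π)).toRingHom) (I n),
        Function.Injective
          (Ideal.quotientMap (I n) ((rename (Prod.map (id : Fin c → Fin c) π)).toRingHom) h) := by
  obtain ⟨hmap, n₀, hn₀⟩ := wide_matrix_chain_eventually_injective_transition_maps_general I
    (fun n π => (hsym n π).le) hincl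
  exact ⟨hmap, n₀, fun m n hm _ => hn₀ m n hm⟩
end

section
/- Let (I_n)_{n∈ℕ} be a symmetric wide-matrix ideal chain over a Noetherian commutative ring K such that every I_n is a radical ideal, for every injection π : [m] → [n] the induced K-algebra homomorphism A_m/I_m → A_n/I_n is injective, and I_0 ≠ A_0 (i.e. 1 ≠ 0 in A_0/I_0). Then there exist n_0 ∈ ℕ and a nonzero element h ∈ A_{n_0}/I_{n_0} with the following property. For n ∈ ℕ set B'_n := (A_{n_0+n}/I_{n_0+n})[1/h], the localization at the image of h under the homomorphism induced by the inclusion [n_0] ⊆ [n_0+n]; each B'_n is a B'_0-algebra, and for j ∈ [n] let ι_j : B'_1 → B'_n be the B'_0-algebra homomorphism induced by the injection [n_0+1] → [n_0+n] that fixes [n_0] and sends n_0+1 to n_0+j. Then for every n ≥ 1, the B'_0-algebra homomorphism from the n-fold tensor product B'_1 ⊗_{B'_0} ⋯ ⊗_{B'_0} B'_1 to B'_n whose j-th tensor factor maps via ι_j is an isomorphism. -/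
open MvPolynomial
open scoped TensorProduct

namespace WideMatrixShift

variable (K : Type) [CommRing K] (c : ℕ)
variable (I : ∀ n : ℕ, Ideal (MvPolynomial (Fin c × Fin n) K))

/-- The quotient `A_n / I_n`. -/
def Qu (n : ℕ) : Type := MvPolynomial (Fin c × Fin n) K ⧸ I n

noncomputable instance (n : ℕ) : CommRing (Qu K c I n) :=
  inferInstanceAs (CommRing (MvPolynomial (Fin c × Fin n) K ⧸ I n))

/-- The property that every injection `[m] → [n]` maps `I m` into `I n`. -/
def ChainMap : Prop := ∀ (m n : ℕ) (π : Fin m → Fin n), Function.Injective π →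
  Ideal.map ((rename (Prod.map (id : Fin c → Fin c) π)).toRingHom) (I m) ≤ I n

/-- The homomorphism `A_m/I_m → A_n/I_n` induced by an injection `π : [m] → [n]`. -/
noncomputable def ind (hmap : ChainMap K c I) (m n : ℕ) (π : Fin m → Fin n)
    (hπ : Function.Injective π) : Qu K c I m →+* Qu K c I n :=
  Ideal.quotientMap (I n) ((rename (Prod.map (id : Fin c → Fin c) π)).toRingHom)
    (Ideal.map_le_iff_le_comap.mp (hmap m n π hπ))

theorem castAdd_inj (m n : ℕ) : Function.Injective (Fin.castAdd n : Fin m → Fin (m + n)) := by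
  intro x y hxy
  apply Fin.ext
  simpa using congrArg Fin.val hxy

theorem ind_ind (hmap : ChainMap K c I) (l m n : ℕ) (π : Fin m → Fin n)
    (π' : Fin l → Fin m) (ρ : Fin l → Fin n) (hπ : Function.Injective π)
    (hπ' : Function.Injective π') (hρ : Function.Injective ρ)
    (hcomp : π ∘ π' = ρ) (x : Qu K c I l) :
    ind K c I hmap m n π hπ (ind K c I hmap l m π' hπ' x)
      = ind K c I hmap l n ρ hρ x := by
  subst hcomp
  obtain ⟨y, rfl⟩ := Ideal.Quotient.mk_surjective
    (I := I l) (x : MvPolynomial (Fin c × Fin l) K ⧸ I l)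
  show Ideal.quotientMap _ _ _ (Ideal.quotientMap _ _ _ (Ideal.Quotient.mk _ y)) = _
  simp only [Ideal.quotientMap_mk, AlgHom.toRingHom_eq_coe, RingHom.coe_coe]
  rw [rename_rename]
  rfl

/-- The injection `[n₀+1] → [n₀+n]` fixing `[n₀]` and sending `n₀+1` to `n₀+j`. -/
def iotaJ (n₀ n : ℕ) (j : Fin n) : Fin (n₀ + 1) → Fin (n₀ + n) :=
  fun i => if h : (i : ℕ) < n₀ then ⟨(i : ℕ), lt_of_lt_of_le h (Nat.le_add_right _ _)⟩
    else ⟨n₀ + (j : ℕ), Nat.add_lt_add_left j.isLt n₀⟩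

theorem iotaJ_inj (n₀ n : ℕ) (j : Fin n) : Function.Injective (iotaJ n₀ n j) := by
  intro a b hab
  have ha := a.isLt
  have hb := b.isLt
  simp only [iotaJ] at hab
  split_ifs at hab with h1 h2 h2 <;>
    · apply Fin.ext
      have hv := congrArg Fin.val hab
      simp only at hv
      omega

variable (hmap : ChainMap K c I) (n₀ : ℕ) (h : Qu K c I n₀)

/-- The image of `h` in `A_{n₀+n}/I_{n₀+n}`. -/
noncomputable def hImg (n : ℕ) : Qu K c I (n₀ + n) :=
  ind K c I hmap n₀ (n₀ + n) (Fin.castAdd n) (castAdd_inj n₀ n) h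

/-- `B'_n = (A_{n₀+n}/I_{n₀+n})[1/h]`. -/
noncomputable abbrev Bp (n : ℕ) : Type := Localization.Away (hImg K c I hmap n₀ h n)

/-- The structure homomorphism `B'_0 = (A_{n₀}/I_{n₀})[1/h] → B'_n`. -/
noncomputable def structMap (n : ℕ) : Localization.Away h →+* Bp K c I hmap n₀ h n :=
  Localization.awayLift
    ((algebraMap (Qu K c I (n₀ + n)) (Bp K c I hmap n₀ h n)).comp
      (ind K c I hmap n₀ (n₀ + n) (Fin.castAdd n) (castAdd_inj n₀ n))) h
    (IsLocalization.map_units (Bp K c I hmap n₀ h n)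
      ⟨hImg K c I hmap n₀ h n, Submonoid.mem_powers _⟩)

theorem iotaJ_comp_castAdd (n₀ n : ℕ) (j : Fin n) :
    iotaJ n₀ n j ∘ (Fin.castAdd 1) = Fin.castAdd n := by
  funext i
  simp only [Function.comp_apply, iotaJ]
  rw [dif_pos (by simpa using i.isLt)]
  apply Fin.ext
  simp

theorem ind_iotaJ_hImg (n : ℕ) (j : Fin n) :
    ind K c I hmap (n₀ + 1) (n₀ + n) (iotaJ n₀ n j) (iotaJ_inj n₀ n j)
        (hImg K c I hmap n₀ h 1)
      = hImg K c I hmap n₀ h n := by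
  unfold hImg
  exact ind_ind K c I hmap n₀ (n₀ + 1) (n₀ + n) (iotaJ n₀ n j) (Fin.castAdd 1)
    (Fin.castAdd n) (iotaJ_inj n₀ n j) (castAdd_inj n₀ 1) (castAdd_inj n₀ n)
    (iotaJ_comp_castAdd n₀ n j) h

/-- The homomorphism `ι_j : B'_1 → B'_n` induced by the injection `[n₀+1] → [n₀+n]`
fixing `[n₀]` and sending `n₀+1` to `n₀+j`. -/
noncomputable def iotaLoc (n : ℕ) (j : Fin n) :
    Bp K c I hmap n₀ h 1 →+* Bp K c I hmap n₀ h n :=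
  Localization.awayLift
    ((algebraMap (Qu K c I (n₀ + n)) (Bp K c I hmap n₀ h n)).comp
      (ind K c I hmap (n₀ + 1) (n₀ + n) (iotaJ n₀ n j) (iotaJ_inj n₀ n j)))
    (hImg K c I hmap n₀ h 1)
    (by
      have hkey := ind_iotaJ_hImg K c I hmap n₀ h n j
      rw [RingHom.comp_apply, hkey]
      exact IsLocalization.map_units (Bp K c I hmap n₀ h n)
        ⟨hImg K c I hmap n₀ h n, Submonoid.mem_powers _⟩)

end WideMatrixShift

/-!
`A_{n+1}/I_{n+1}` is generated over `A_n/I_n` by the `c` variables of the new column, and for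
`a ∈ A_n/I_n` the exponents of leading terms `a * X ^ u` of relations among them form an up-set of
`ℕ^c`. This up-set grows when `a` is replaced by a multiple or by its image further up the chain,
and by Dickson's lemma up-sets of `ℕ^c` satisfy the ascending chain condition; choose `h ≠ 0` whose
up-set `E` is maximal. After inverting `h`, at every level each exponent in `E` is the leading
exponent of a monic relation, while by maximality no nonzero relation has its leading exponent
outside `E`. Hence the monomials of the new column with exponents outside `E` are a basis of
`B'_{n+1}` over `B'_n`. Iterating, the products of such monomials, one in each of the `n` new
columns, are a basis of `B'_n` over `B'_0`, and these products are exactly the images of the tensor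
products of basis elements of `B'_1`.
-/

theorem wellFoundedLT_upperSet (α : Type*) [Preorder α] [WellQuasiOrderedLE α] :
    WellFoundedLT (UpperSet α) := by
  rw [WellFoundedLT, isWellFounded_iff, RelEmbedding.wellFounded_iff_isEmpty]
  refine ⟨fun f => ?_⟩
  have hanti : StrictAnti f := fun m n hmn => f.map_rel_iff.2 hmn
  have hnew (n : ℕ) : ∃ x ∈ f (n + 1), x ∉ f n :=
    Set.exists_of_ssubset (UpperSet.coe_ssubset_coe.2 (hanti n.lt_succ_self))
  choose x hx hx' using hnew
  obtain ⟨m, n, hmn, hle⟩ := wellQuasiOrdered_le x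
  exact hx' n ((f n).upper hle (hanti.antitone hmn (hx m)))

section LeadingExponents

variable {σ R R' : Type*} [CommRing R] [CommRing R'] (o : MonomialOrder σ)

open scoped MonomialOrder

/-- The exponents `u` for which `J` has an element with leading term `a * X ^ u`. Only
`degree ≼ u` and `coeff u = a` are asked for, so that scaling and base change need no care when the
leading coefficient vanishes; in particular every exponent belongs to the set for `a = 0`. -/
def leadingExponents (J : Ideal (MvPolynomial σ R)) (a : R) : UpperSet (σ →₀ ℕ) where
  carrier := {u | ∃ p ∈ J, o.degree p ≼[o] u ∧ p.coeff u = a}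
  upper' := by
    rintro u v huv ⟨p, hp, hdeg, hcoeff⟩
    obtain ⟨w, rfl⟩ := exists_add_of_le huv
    refine ⟨p * monomial w 1, J.mul_mem_right _ hp, ?_, ?_⟩
    · calc o.toSyn (o.degree (p * monomial w 1))
          ≤ o.toSyn (o.degree p) + o.toSyn (o.degree (monomial w (1 : R))) := by
            simpa only [map_add] using o.degree_mul_le
        _ ≤ o.toSyn u + o.toSyn w := add_le_add hdeg (o.degree_monomial_le 1)
        _ = o.toSyn (u + w) := (map_add _ _ _).symm
    · rw [coeff_mul_monomial, mul_one, hcoeff]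

variable {o} {J : Ideal (MvPolynomial σ R)} {J' : Ideal (MvPolynomial σ R')}

theorem degree_mem_leadingExponents {p : MvPolynomial σ R} (hp : p ∈ J) :
    o.degree p ∈ leadingExponents o J (o.leadingCoeff p) :=
  ⟨p, hp, le_rfl, rfl⟩

theorem mem_leadingExponents_mul {a : R} {u : σ →₀ ℕ} (b : R) (hu : u ∈ leadingExponents o J a) :
    u ∈ leadingExponents o J (b * a) := by
  obtain ⟨p, hp, hdeg, rfl⟩ := hu
  exact ⟨b • p, Submodule.smul_of_tower_mem J b hp, o.degree_smul_le.trans hdeg, coeff_smul _ _ _⟩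

theorem mem_leadingExponents_map {φ : R →+* R'} (hJ : J ≤ J'.comap (MvPolynomial.map φ))
    {a : R} {u : σ →₀ ℕ} (hu : u ∈ leadingExponents o J a) :
    u ∈ leadingExponents o J' (φ a) := by
  obtain ⟨p, hp, hdeg, rfl⟩ := hu
  refine ⟨MvPolynomial.map φ p, hJ hp, ?_, coeff_map φ p u⟩
  exact o.degree_le_iff.2 fun v hv => o.degree_le_iff.1 hdeg v (support_map_subset φ p hv)

theorem exists_map_eq_smul_of_isLocalization (M : Submonoid R) [Algebra R R'] [IsLocalization M R']
    (p : MvPolynomial σ R') :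
    ∃ s ∈ M, ∃ q : MvPolynomial σ R, q.support ⊆ p.support ∧
      MvPolynomial.map (algebraMap R R') q = s • p := by
  classical
  obtain ⟨s, hs⟩ := IsLocalization.exist_integer_multiples M p.support p.coeff
  choose! g hg using hs
  refine ⟨s, s.2, ∑ u ∈ p.support, monomial u (g u), ?_, ?_⟩
  · exact support_sum.trans (Finset.biUnion_subset.2 fun u hu =>
      support_monomial_subset.trans (Finset.singleton_subset_iff.2 hu))
  · conv_rhs => rw [p.as_sum, Finset.smul_sum]
    rw [map_sum]
    refine Finset.sum_congr rfl fun u hu => ?_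
    rw [map_monomial, hg u hu, smul_monomial]

theorem exists_mem_leadingExponents_of_isLocalization (M : Submonoid R) [Algebra R R']
    [IsLocalization M R']
    (hJ : ∀ q, MvPolynomial.map (algebraMap R R') q ∈ J' → ∃ s ∈ M, s • q ∈ J)
    {a' : R'} {u : σ →₀ ℕ} (hu : u ∈ leadingExponents o J' a') :
    ∃ s ∈ M, ∃ a, u ∈ leadingExponents o J a ∧ algebraMap R R' a = s • a' := by
  obtain ⟨p, hp, hdeg, rfl⟩ := hu
  obtain ⟨s, hs, q, hqp, hq⟩ := exists_map_eq_smul_of_isLocalization M p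
  obtain ⟨t, ht, htq⟩ := hJ q (hq ▸ Submodule.smul_of_tower_mem J' s hp)
  refine ⟨t * s, M.mul_mem ht hs, t * q.coeff u, ⟨t • q, htq, ?_, coeff_smul _ _ _⟩, ?_⟩
  · refine o.degree_smul_le.trans (o.degree_le_iff.2 fun v hv => ?_)
    exact o.degree_le_iff.1 hdeg v (hqp hv)
  · rw [map_mul, ← coeff_map, hq, coeff_smul, mul_smul, ← Algebra.smul_def]

end LeadingExponents

section StandardMonomials

variable {σ R S : Type*} [CommRing R] [CommRing S] [Algebra R S] {o : MonomialOrder σ}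
  {E : Set (σ →₀ ℕ)}

theorem exists_degree_eq_of_mem_leadingExponents [Nontrivial R] {J : Ideal (MvPolynomial σ R)}
    {a : R} (ha : IsUnit a) {u : σ →₀ ℕ} (hu : u ∈ leadingExponents o J a) :
    ∃ p ∈ J, o.degree p = u ∧ IsUnit (o.leadingCoeff p) := by
  obtain ⟨p, hp, hdeg, rfl⟩ := hu
  have hdegree : o.degree p = u :=
    o.toSyn.injective (hdeg.antisymm (o.le_degree (mem_support_iff.2 ha.ne_zero)))
  exact ⟨p, hp, hdegree, by rwa [MonomialOrder.leadingCoeff, hdegree]⟩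

theorem isCompl_restrictSupport_compl {J : Ideal (MvPolynomial σ R)}
    (hdegree : ∀ p ∈ J, p ≠ 0 → o.degree p ∈ E)
    (hunit : ∀ u ∈ E, ∃ a, IsUnit a ∧ u ∈ leadingExponents o J a) :
    IsCompl (J.restrictScalars R) (restrictSupport R Eᶜ) := by
  constructor
  · refine Submodule.disjoint_def.2 fun p hpJ hp => by_contra fun hp0 => ?_
    exact (mem_restrictSupport_iff R).1 hp (o.degree_mem_support hp0) (hdegree p hpJ hp0)
  · rw [codisjoint_iff, eq_top_iff]
    rintro p -
    cases subsingleton_or_nontrivial R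
    · exact Subsingleton.elim 0 p ▸ zero_mem _
    obtain ⟨g, r, rfl, -, hr⟩ := o.div_set
      (B := {b | b ∈ J ∧ IsUnit (o.leadingCoeff b)}) (fun b hb => hb.2) p
    refine Submodule.add_mem_sup ?_ ((mem_restrictSupport_iff R).2 fun v hv hvE => ?_)
    · exact sum_mem fun b _ => J.mul_mem_left _ b.2.1
    · obtain ⟨a, ha, hva⟩ := hunit v hvE
      obtain ⟨b, hbJ, rfl, hb⟩ := exists_degree_eq_of_mem_leadingExponents ha hva
      exact hr _ hv b ⟨hbJ, hb⟩ le_rfl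

theorem coe_basisRestrictSupport (s : Set (σ →₀ ℕ)) (u : s) :
    (basisRestrictSupport R s u : MvPolynomial σ R) = monomial u.1 1 :=
  congrArg _ (Finsupp.supportedEquivFinsupp_symm_single s u (1 : R))

theorem exists_basis_standardMonomials {x : σ → S}
    (hsurj : Function.Surjective (aeval x : MvPolynomial σ R →ₐ[R] S))
    (hdegree : ∀ p ∈ RingHom.ker (aeval x : MvPolynomial σ R →ₐ[R] S), p ≠ 0 → o.degree p ∈ E)
    (hunit : ∀ u ∈ E, ∃ a, IsUnit a ∧
      u ∈ leadingExponents o (RingHom.ker (aeval x : MvPolynomial σ R →ₐ[R] S)) a) :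
    ∃ b : Module.Basis ↥Eᶜ R S, ∀ u, b u = u.1.prod fun i e => x i ^ e := by
  let equiv : restrictSupport R Eᶜ ≃ₗ[R] S :=
    (Submodule.quotientEquivOfIsCompl _ _
      (isCompl_restrictSupport_compl hdegree hunit)).symm ≪≫ₗ
      (aeval x : MvPolynomial σ R →ₐ[R] S).toLinearMap.quotKerEquivOfSurjective hsurj
  refine ⟨(basisRestrictSupport R Eᶜ).map equiv, fun u => ?_⟩
  calc equiv (basisRestrictSupport R Eᶜ u)
      = aeval x (basisRestrictSupport R Eᶜ u : MvPolynomial σ R) := rfl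
    _ = u.1.prod fun i e => x i ^ e := by
      rw [coe_basisRestrictSupport, aeval_monomial, map_one, one_mul]

section Localization

variable {R' S' : Type*} [CommRing R'] [CommRing S'] [Algebra R R'] [Algebra S S'] [Algebra R' S']
  [Algebra R S'] [IsScalarTower R S S'] [IsScalarTower R R' S']

theorem aeval_algebraMap_comp_map (x : σ → S) (p : MvPolynomial σ R) :
    aeval (algebraMap S S' ∘ x) (MvPolynomial.map (algebraMap R R') p) =
      algebraMap S S' (aeval x p) := by
  rw [aeval_map_algebraMap, aeval_algebraMap_apply]

variable (M : Submonoid R) [IsLocalization (Algebra.algebraMapSubmonoid S M) S']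

theorem exists_smul_mem_ker_aeval_of_map_mem_ker {x : σ → S} {q : MvPolynomial σ R}
    (hq : MvPolynomial.map (algebraMap R R') q ∈
      RingHom.ker (aeval (algebraMap S S' ∘ x) : MvPolynomial σ R' →ₐ[R'] S')) :
    ∃ s ∈ M, s • q ∈ RingHom.ker (aeval x : MvPolynomial σ R →ₐ[R] S) := by
  rw [RingHom.mem_ker, aeval_algebraMap_comp_map,
    IsLocalization.map_eq_zero_iff (Algebra.algebraMapSubmonoid S M)] at hq
  obtain ⟨⟨_, s, hs, rfl⟩, hsq⟩ := hq
  refine ⟨s, hs, ?_⟩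
  rw [RingHom.mem_ker, map_smul, Algebra.smul_def]
  exact hsq

theorem aeval_algebraMap_comp_surjective [IsLocalization M R'] {x : σ → S}
    (hsurj : Function.Surjective (aeval x : MvPolynomial σ R →ₐ[R] S)) :
    Function.Surjective (aeval (algebraMap S S' ∘ x) : MvPolynomial σ R' →ₐ[R'] S') := by
  intro y
  obtain ⟨⟨z, _, s, hs, rfl⟩, hz⟩ := IsLocalization.surj (Algebra.algebraMapSubmonoid S M) y
  obtain ⟨p, rfl⟩ := hsurj z
  refine ⟨IsLocalization.mk' R' 1 ⟨s, hs⟩ • MvPolynomial.map (algebraMap R R') p, ?_⟩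
  have hs' : IsLocalization.mk' R' 1 ⟨s, hs⟩ * algebraMap R R' s = 1 :=
    (IsLocalization.mk'_spec R' 1 ⟨s, hs⟩).trans (map_one _)
  calc aeval (algebraMap S S' ∘ x)
        (IsLocalization.mk' R' 1 ⟨s, hs⟩ • MvPolynomial.map (algebraMap R R') p)
      = IsLocalization.mk' R' 1 ⟨s, hs⟩ • (y * algebraMap S S' (algebraMap R S s)) := by
        rw [map_smul, aeval_algebraMap_comp_map, hz]
    _ = IsLocalization.mk' R' 1 ⟨s, hs⟩ • algebraMap R R' s • y := by
        rw [← IsScalarTower.algebraMap_apply, IsScalarTower.algebraMap_apply R R' S', mul_comm,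
          Algebra.smul_def (_ : R') y]
    _ = y := by rw [smul_smul, hs', one_smul]

theorem exists_basis_standardMonomials_of_isLocalization [IsLocalization M R'] {x : σ → S}
    (hsurj : Function.Surjective (aeval x : MvPolynomial σ R →ₐ[R] S))
    (hmem : ∀ a, algebraMap R R' a ≠ 0 →
      ↑(leadingExponents o (RingHom.ker (aeval x : MvPolynomial σ R →ₐ[R] S)) a) ⊆ E)
    (hunit : ∀ u ∈ E, ∃ s ∈ M,
      u ∈ leadingExponents o (RingHom.ker (aeval x : MvPolynomial σ R →ₐ[R] S)) s) :
    ∃ b : Module.Basis ↥Eᶜ R' S', ∀ u, b u = u.1.prod fun i e => algebraMap S S' (x i) ^ e := by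
  refine exists_basis_standardMonomials (o := o) (x := algebraMap S S' ∘ x)
    (aeval_algebraMap_comp_surjective M hsurj) ?_ ?_
  · intro p hp hp0
    obtain ⟨s, hs, a, ha, has⟩ := exists_mem_leadingExponents_of_isLocalization M
      (fun q => exists_smul_mem_ker_aeval_of_map_mem_ker M)
      (degree_mem_leadingExponents (o := o) hp)
    refine hmem a ?_ ha
    rw [has, Algebra.smul_def, Ne, (IsLocalization.map_units R' ⟨s, hs⟩).mul_right_eq_zero]
    exact o.leadingCoeff_ne_zero_iff.2 hp0
  · intro u hu
    obtain ⟨s, hs, hus⟩ := hunit u hu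
    refine ⟨algebraMap R R' s, IsLocalization.map_units R' ⟨s, hs⟩,
      mem_leadingExponents_map (fun p hp => ?_) hus⟩
    rw [Ideal.mem_comap, RingHom.mem_ker, aeval_algebraMap_comp_map, RingHom.mem_ker.1 hp, map_zero]

end Localization

end StandardMonomials

section PiTensorProduct

variable {ι R : Type*} [CommSemiring R]

section Lift

variable {A : ι → Type*} {S : Type*} [Fintype ι] [∀ i, CommSemiring (A i)] [∀ i, Algebra R (A i)]
  [CommSemiring S] [Algebra R S]

/-- The algebra homomorphism out of a tensor product of algebras that a family of algebra
homomorphisms into a common commutative target induces on the factors. -/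
noncomputable def piTensorProductLift (φ : ∀ i, A i →ₐ[R] S) : (⨂[R] i, A i) →ₐ[R] S :=
  PiTensorProduct.liftAlgHom
    ((MultilinearMap.mkPiAlgebra R ι S).compLinearMap fun i => (φ i).toLinearMap)
    (by simp) (by simp [Finset.prod_mul_distrib])

theorem piTensorProductLift_tprod (φ : ∀ i, A i →ₐ[R] S) (x : ∀ i, A i) :
    piTensorProductLift φ (PiTensorProduct.tprod R x) = ∏ i, φ i (x i) :=
  PiTensorProduct.lift.tprod x

end Lift

theorem bijective_of_map_tprod_basis {M κ : ι → Type*} {N : Type*} [Finite ι]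
    [∀ i, AddCommMonoid (M i)] [∀ i, Module R (M i)] [AddCommMonoid N] [Module R N]
    (b : ∀ i, Module.Basis (κ i) R (M i)) (d : Module.Basis (∀ i, κ i) R N)
    (Φ : (⨂[R] i, M i) →ₗ[R] N)
    (hΦ : ∀ f : ∀ i, κ i, Φ (PiTensorProduct.tprod R fun i => b i (f i)) = d f) :
    Function.Bijective Φ := by
  have hequiv : Φ = ((Basis.piTensorProduct b).equiv d (Equiv.refl _)).toLinearMap :=
    (Basis.piTensorProduct b).ext fun f => by
      rw [LinearEquiv.coe_coe, Module.Basis.equiv_apply, Basis.piTensorProduct_apply, hΦ,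
        Equiv.refl_apply]
  exact hequiv ▸ LinearEquiv.bijective _

end PiTensorProduct

namespace WideMatrixShift

variable {K : Type} [CommRing K] {c : ℕ} {I : ∀ n : ℕ, Ideal (MvPolynomial (Fin c × Fin n) K)}
  (hmap : ChainMap K c I)

section Columns

variable (I) in
/-- The class of the variable `x_{i,j}` in `A_n/I_n`. -/
noncomputable def columnVar (n : ℕ) (j : Fin n) (i : Fin c) : Qu K c I n :=
  Ideal.Quotient.mk (I n) (X (i, j))

theorem ind_columnVar {m n : ℕ} (π : Fin m → Fin n) (hπ : Function.Injective π) (j : Fin m)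
    (i : Fin c) : ind K c I hmap m n π hπ (columnVar I m j i) = columnVar I n (π j) i :=
  congrArg (Ideal.Quotient.mk (I n)) (rename_X _ _)

theorem iotaJ_last (m n : ℕ) (j : Fin n) : iotaJ m n j (Fin.last m) = Fin.natAdd m j :=
  dif_neg (lt_irrefl m)

/-- The inclusion `A_m/I_m → A_{m+1}/I_{m+1}`. -/
noncomputable def inclSucc (m : ℕ) : Qu K c I m →+* Qu K c I (m + 1) :=
  ind K c I hmap m (m + 1) Fin.castSucc (Fin.castSucc_injective m)

theorem inclSucc_ind_castAdd (m k : ℕ) (x : Qu K c I m) :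
    inclSucc hmap (m + k) (ind K c I hmap m (m + k) (Fin.castAdd k) (castAdd_inj m k) x) =
      ind K c I hmap m (m + (k + 1)) (Fin.castAdd (k + 1)) (castAdd_inj m (k + 1)) x :=
  ind_ind K c I hmap m (m + k) (m + k + 1) Fin.castSucc (Fin.castAdd k) (Fin.castAdd (k + 1))
    (Fin.castSucc_injective _) (castAdd_inj m k) (castAdd_inj m (k + 1)) rfl x

theorem ind_iotaJ_inclSucc (m n : ℕ) (j : Fin n) (x : Qu K c I m) :
    ind K c I hmap (m + 1) (m + n) (iotaJ m n j) (iotaJ_inj m n j) (inclSucc hmap m x) =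
      ind K c I hmap m (m + n) (Fin.castAdd n) (castAdd_inj m n) x :=
  ind_ind K c I hmap m (m + 1) (m + n) (iotaJ m n j) Fin.castSucc (Fin.castAdd n) (iotaJ_inj m n j)
    (Fin.castSucc_injective m) (castAdd_inj m n) (iotaJ_comp_castAdd m n j) x

/-- The presentation of `A_{m+1}/I_{m+1}` as a quotient of the polynomial ring over `A_m/I_m` in
the `c` variables of the new column. -/
noncomputable def lastColumnEval (m : ℕ) : MvPolynomial (Fin c) (Qu K c I m) →+* Qu K c I (m + 1) :=
  eval₂Hom (inclSucc hmap m) (columnVar I (m + 1) (Fin.last m))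

theorem lastColumnEval_surjective (m : ℕ) : Function.Surjective (lastColumnEval hmap m) := by
  rw [← RingHom.range_eq_top, eq_top_iff]
  rintro y -
  obtain ⟨p, rfl⟩ := Ideal.Quotient.mk_surjective (I := I (m + 1)) y
  induction p using MvPolynomial.induction_on with
  | C a =>
    exact ⟨C (Ideal.Quotient.mk (I m) (C a)), (eval₂Hom_C _ _ _).trans
      (congrArg (Ideal.Quotient.mk (I (m + 1))) (rename_C _ a))⟩
  | add p q hp hq => exact add_mem hp hq
  | mul_X p ij hp =>
    obtain ⟨i, j⟩ := ij
    refine mul_mem (b := columnVar I (m + 1) j i) hp ?_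
    induction j using Fin.lastCases with
    | last => exact ⟨X i, eval₂Hom_X' _ _ _⟩
    | cast j => exact ⟨C (columnVar I m j i), (eval₂Hom_C _ _ _).trans (ind_columnVar hmap _ _ j i)⟩

theorem lastColumnEval_map_ind (m k : ℕ) (p : MvPolynomial (Fin c) (Qu K c I m)) :
    lastColumnEval hmap (m + k)
        (MvPolynomial.map (ind K c I hmap m (m + k) (Fin.castAdd k) (castAdd_inj m k)) p) =
      ind K c I hmap (m + 1) (m + (k + 1)) (iotaJ m (k + 1) (Fin.last k))
        (iotaJ_inj m (k + 1) (Fin.last k)) (lastColumnEval hmap m p) := by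
  induction p using MvPolynomial.induction_on with
  | C a =>
    rw [map_C, lastColumnEval, eval₂Hom_C, lastColumnEval, eval₂Hom_C, inclSucc_ind_castAdd,
      ind_iotaJ_inclSucc]
  | add p q hp hq => simp only [map_add, hp, hq]
  | mul_X p i hp =>
    rw [map_mul, map_mul, map_X, map_mul, map_mul, hp]
    congr 1
    rw [lastColumnEval, eval₂Hom_X', lastColumnEval, eval₂Hom_X', ind_columnVar, iotaJ_last]
    rfl

/-- The exponents of the new column's monomials that are leading, with leading coefficient `a`, in
a relation between the new column and `A_m/I_m`. -/
noncomputable def newColumnExponents (o : MonomialOrder (Fin c)) {m : ℕ} (a : Qu K c I m) :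
    UpperSet (Fin c →₀ ℕ) :=
  leadingExponents o (RingHom.ker (lastColumnEval hmap m)) a

variable {hmap} {o : MonomialOrder (Fin c)}

theorem mem_newColumnExponents_hImg {m : ℕ} {a : Qu K c I m} {u : Fin c →₀ ℕ}
    (hu : u ∈ newColumnExponents hmap o a) (k : ℕ) :
    u ∈ newColumnExponents hmap o (hImg K c I hmap m a k) := by
  refine mem_leadingExponents_map (fun p hp => ?_) hu
  rw [Ideal.mem_comap, RingHom.mem_ker, lastColumnEval_map_ind, RingHom.mem_ker.1 hp, map_zero]

variable (hmap o) in
/-- The maximality of `h` which makes the shift theorem hold after inverting it: no element that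
stays nonzero in some `B'_n` is the leading coefficient of more monomials than `h`. Nonvanishing in
`B'_n` enters through its weaker consequence `a * h ≠ 0`. -/
def HasMaximalExponents {n₀ : ℕ} (h : Qu K c I n₀) : Prop :=
  ∀ (n : ℕ) (a : Qu K c I (n₀ + n)), a * hImg K c I hmap n₀ h n ≠ 0 →
    (newColumnExponents hmap o a : Set (Fin c →₀ ℕ)) ⊆ newColumnExponents hmap o h

variable (hmap o) in
theorem exists_hasMaximalExponents (hne : I 0 ≠ ⊤) :
    ∃ (n₀ : ℕ) (h : Qu K c I n₀), h ≠ 0 ∧ HasMaximalExponents hmap o h := by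
  have := wellFoundedLT_upperSet (Fin c →₀ ℕ)
  have : Nontrivial (Qu K c I 0) := Ideal.Quotient.nontrivial_iff.2 hne
  have : Nonempty {x : Σ n, Qu K c I n // x.2 ≠ 0} := ⟨⟨⟨0, 1⟩, one_ne_zero⟩⟩
  let exponents (x : {x : Σ n, Qu K c I n // x.2 ≠ 0}) := newColumnExponents hmap o x.1.2
  obtain ⟨⟨⟨n₀, h⟩, hh⟩, hmin⟩ : ∃ x, ∀ y, ¬ exponents y < exponents x :=
    ⟨Function.argmin exponents, Function.not_lt_argmin exponents⟩
  refine ⟨n₀, h, hh, fun n a ha u hu => ?_⟩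
  have hle : newColumnExponents hmap o (a * hImg K c I hmap n₀ h n) ≤ newColumnExponents hmap o h :=
    fun v hv => mem_leadingExponents_mul a (mem_newColumnExponents_hImg hv n)
  have heq := hle.eq_of_not_lt (hmin ⟨⟨n₀ + n, a * hImg K c I hmap n₀ h n⟩, ha⟩)
  rw [SetLike.mem_coe, ← heq, mul_comm]
  exact mem_leadingExponents_mul _ hu

end Columns

section Localization

variable {n₀ : ℕ} (h : Qu K c I n₀)

theorem inclSucc_hImg (n : ℕ) :
    inclSucc hmap (n₀ + n) (hImg K c I hmap n₀ h n) = hImg K c I hmap n₀ h (n + 1) :=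
  inclSucc_ind_castAdd hmap n₀ n h

/-- The homomorphism `B'_n → B'_{n+1}` induced by the inclusion `[n₀+n] ⊆ [n₀+n+1]`. -/
noncomputable def inclSuccLoc (n : ℕ) : Bp K c I hmap n₀ h n →+* Bp K c I hmap n₀ h (n + 1) :=
  Localization.awayLift
    ((algebraMap (Qu K c I (n₀ + (n + 1))) (Bp K c I hmap n₀ h (n + 1))).comp
      (inclSucc hmap (n₀ + n)))
    (hImg K c I hmap n₀ h n)
    (by
      rw [RingHom.comp_apply, inclSucc_hImg]
      exact IsLocalization.Away.algebraMap_isUnit _)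

theorem inclSuccLoc_algebraMap (n : ℕ) (x : Qu K c I (n₀ + n)) :
    inclSuccLoc hmap h n (algebraMap _ _ x) =
      algebraMap (Qu K c I (n₀ + (n + 1))) _ (inclSucc hmap (n₀ + n) x) := by
  rw [inclSuccLoc, Localization.awayLift, IsLocalization.Away.lift_eq, RingHom.comp_apply]

theorem structMap_algebraMap (n : ℕ) (x : Qu K c I n₀) :
    structMap K c I hmap n₀ h n (algebraMap _ _ x) =
      algebraMap _ _ (ind K c I hmap n₀ (n₀ + n) (Fin.castAdd n) (castAdd_inj n₀ n) x) := by
  exact IsLocalization.Away.lift_eq h (IsLocalization.Away.algebraMap_isUnit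
    (hImg K c I hmap n₀ h n)) x

theorem iotaLoc_algebraMap (n : ℕ) (j : Fin n) (x : Qu K c I (n₀ + 1)) :
    iotaLoc K c I hmap n₀ h n j (algebraMap _ _ x) =
      algebraMap _ _ (ind K c I hmap (n₀ + 1) (n₀ + n) (iotaJ n₀ n j) (iotaJ_inj n₀ n j) x) := by
  rw [iotaLoc, Localization.awayLift, IsLocalization.Away.lift_eq, RingHom.comp_apply]

theorem inclSuccLoc_comp_structMap (n : ℕ) :
    (inclSuccLoc hmap h n).comp (structMap K c I hmap n₀ h n) =
      structMap K c I hmap n₀ h (n + 1) := by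
  refine IsLocalization.ringHom_ext (Submonoid.powers h) (RingHom.ext fun x => ?_)
  simp only [RingHom.comp_apply, structMap_algebraMap, inclSuccLoc_algebraMap, inclSucc_ind_castAdd]

theorem iotaLoc_comp_structMap (n : ℕ) (j : Fin n) :
    (iotaLoc K c I hmap n₀ h n j).comp (structMap K c I hmap n₀ h 1) =
      structMap K c I hmap n₀ h n := by
  refine IsLocalization.ringHom_ext (Submonoid.powers h) (RingHom.ext fun x => ?_)
  simp only [RingHom.comp_apply, structMap_algebraMap, iotaLoc_algebraMap]
  exact congrArg _ (ind_iotaJ_inclSucc hmap n₀ n j x)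

theorem ind_castAdd_zero (x : Qu K c I n₀) :
    ind K c I hmap n₀ (n₀ + 0) (Fin.castAdd 0) (castAdd_inj n₀ 0) x = x := by
  obtain ⟨p, rfl⟩ := Ideal.Quotient.mk_surjective (I := I n₀) x
  exact congrArg (Ideal.Quotient.mk (I n₀)) (rename_id_apply p)

theorem structMap_zero_bijective : Function.Bijective (structMap K c I hmap n₀ h 0) := by
  let : Algebra (Qu K c I n₀) (Bp K c I hmap n₀ h 0) :=
    inferInstanceAs (Algebra (Qu K c I (n₀ + 0)) _)
  have hImg_zero : hImg K c I hmap n₀ h 0 = h := ind_castAdd_zero hmap h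
  have hAway : IsLocalization.Away (hImg K c I hmap n₀ h 0) (Bp K c I hmap n₀ h 0) := inferInstance
  have : IsLocalization.Away h (Bp K c I hmap n₀ h 0) :=
    IsLocalization.Away.of_associated (r := hImg K c I hmap n₀ h 0) (.of_eq hImg_zero)
  refine IsLocalization.bijective (Submonoid.powers h) _ (RingHom.ext fun x => ?_)
  rw [RingHom.comp_apply, structMap_algebraMap, ind_castAdd_zero]
  rfl

/-- The `B'_0`-algebra structure of `B'_n`, as in the statement of the theorem. -/
noncomputable abbrev structAlgebra (n : ℕ) :
    Algebra (Localization.Away h) (Bp K c I hmap n₀ h n) :=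
  (structMap K c I hmap n₀ h n).toAlgebra

/-- The `B'_n`-algebra structure of `B'_{n+1}` coming from the inclusion `[n₀+n] ⊆ [n₀+n+1]`. -/
noncomputable abbrev inclSuccAlgebra (n : ℕ) :
    Algebra (Bp K c I hmap n₀ h n) (Bp K c I hmap n₀ h (n + 1)) :=
  (inclSuccLoc hmap h n).toAlgebra

attribute [local instance] structAlgebra inclSuccAlgebra

theorem isScalarTower_inclSuccAlgebra (n : ℕ) : IsScalarTower (Localization.Away h)
    (Bp K c I hmap n₀ h n) (Bp K c I hmap n₀ h (n + 1)) :=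
  .of_algebraMap_eq' (inclSuccLoc_comp_structMap hmap h n).symm

/-- `ι_j` as a homomorphism of `B'_0`-algebras. -/
noncomputable def iotaAlgHom (n : ℕ) (j : Fin n) :
    Bp K c I hmap n₀ h 1 →ₐ[Localization.Away h] Bp K c I hmap n₀ h n where
  __ := iotaLoc K c I hmap n₀ h n j
  commutes' := RingHom.congr_fun (iotaLoc_comp_structMap hmap h n j)

/-- The monomial with exponent `u` in the variables of the column `n₀ + j`, as an element of
`B'_n`. -/
noncomputable def newMonomial (n : ℕ) (j : Fin n) (u : Fin c →₀ ℕ) : Bp K c I hmap n₀ h n :=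
  u.prod fun i e => algebraMap (Qu K c I (n₀ + n)) _ (columnVar I (n₀ + n) (Fin.natAdd n₀ j) i) ^ e

theorem inclSuccLoc_newMonomial (n : ℕ) (j : Fin n) (u : Fin c →₀ ℕ) :
    inclSuccLoc hmap h n (newMonomial hmap h n j u) = newMonomial hmap h (n + 1) j.castSucc u := by
  simp only [newMonomial, map_finsuppProd, map_pow, inclSuccLoc_algebraMap, inclSucc, ind_columnVar]
  rfl

theorem iotaLoc_newMonomial (n : ℕ) (j : Fin n) (u : Fin c →₀ ℕ) :
    iotaLoc K c I hmap n₀ h n j (newMonomial hmap h 1 0 u) = newMonomial hmap h n j u := by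
  have hlast : iotaJ n₀ n j (Fin.natAdd n₀ 0) = Fin.natAdd n₀ j := iotaJ_last n₀ n j
  simp only [newMonomial, map_finsuppProd, map_pow, iotaLoc_algebraMap, ind_columnVar, hlast]

/-- The homomorphism `B'_1 ⊗ ⋯ ⊗ B'_1 → B'_n` over `B'_0` of the shift theorem, with `j`-th factor
mapped by `ι_j`. -/
noncomputable def shiftHom (n : ℕ) :
    (⨂[Localization.Away h] _ : Fin n, Bp K c I hmap n₀ h 1) →ₐ[Localization.Away h]
      Bp K c I hmap n₀ h n :=
  piTensorProductLift (iotaAlgHom hmap h n)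

theorem shiftHom_tprod (n : ℕ) (x : Fin n → Bp K c I hmap n₀ h 1) :
    shiftHom hmap h n (PiTensorProduct.tprod (Localization.Away h) x) =
      ∏ j, iotaLoc K c I hmap n₀ h n j (x j) :=
  piTensorProductLift_tprod (iotaAlgHom hmap h n) x

variable {hmap h} {o : MonomialOrder (Fin c)}

theorem HasMaximalExponents.exists_basis_succ (hmax : HasMaximalExponents hmap o h) (n : ℕ) :
    ∃ b : Module.Basis ↥(newColumnExponents hmap o h : Set (Fin c →₀ ℕ))ᶜ
      (Bp K c I hmap n₀ h n) (Bp K c I hmap n₀ h (n + 1)),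
      ∀ u, b u = newMonomial hmap h (n + 1) (Fin.last n) u := by
  let : Algebra (Qu K c I (n₀ + n)) (Qu K c I (n₀ + (n + 1))) := (inclSucc hmap (n₀ + n)).toAlgebra
  have : IsScalarTower (Qu K c I (n₀ + n)) (Bp K c I hmap n₀ h n) (Bp K c I hmap n₀ h (n + 1)) :=
    .of_algebraMap_eq fun x => (inclSuccLoc_algebraMap hmap h n x).symm
  let M := Submonoid.powers (hImg K c I hmap n₀ h n)
  have : IsLocalization (Algebra.algebraMapSubmonoid (Qu K c I (n₀ + (n + 1))) M)
      (Bp K c I hmap n₀ h (n + 1)) := by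
    rw [Algebra.algebraMapSubmonoid_powers]
    exact (inclSucc_hImg hmap h n).symm ▸ inferInstance
  refine exists_basis_standardMonomials_of_isLocalization (o := o) M
    (lastColumnEval_surjective hmap (n₀ + n)) (fun a ha => hmax n a fun h0 => ha ?_) ?_
  · exact (IsLocalization.map_eq_zero_iff M _ a).2
      ⟨⟨_, Submonoid.mem_powers _⟩, (mul_comm _ _).trans h0⟩
  · exact fun u hu => ⟨_, Submonoid.mem_powers _, mem_newColumnExponents_hImg hu n⟩

theorem HasMaximalExponents.exists_basis (hmax : HasMaximalExponents hmap o h) (n : ℕ) :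
    ∃ b : Module.Basis (Fin n → ↥(newColumnExponents hmap o h : Set (Fin c →₀ ℕ))ᶜ)
      (Localization.Away h) (Bp K c I hmap n₀ h n),
      ∀ f, b f = ∏ j, newMonomial hmap h n j (f j) := by
  induction n with
  | zero =>
    let equiv : Localization.Away h ≃ₗ[Localization.Away h] Bp K c I hmap n₀ h 0 :=
      .ofBijective (Algebra.linearMap _ _) (structMap_zero_bijective hmap h)
    refine ⟨(Module.Basis.singleton _ _).map equiv, fun f => ?_⟩
    rw [Module.Basis.map_apply, Module.Basis.singleton_apply, Fin.prod_univ_zero]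
    exact map_one (structMap K c I hmap n₀ h 0)
  | succ n ih =>
    obtain ⟨b, hb⟩ := ih
    obtain ⟨d, hd⟩ := hmax.exists_basis_succ n
    have := isScalarTower_inclSuccAlgebra hmap h n
    refine ⟨(b.smulTower d).reindex
      ((Equiv.prodComm _ _).trans (Fin.snocEquiv fun _ => _)), fun f => ?_⟩
    rw [Module.Basis.reindex_apply, Module.Basis.smulTower_apply, hb, hd, Algebra.smul_def,
      Fin.prod_univ_castSucc]
    congr 1
    refine (map_prod (inclSuccLoc hmap h n) _ _).trans (Finset.prod_congr rfl fun j _ => ?_)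
    exact inclSuccLoc_newMonomial hmap h n _ _

theorem HasMaximalExponents.bijective_shiftHom (hmax : HasMaximalExponents hmap o h) (n : ℕ) :
    Function.Bijective (shiftHom hmap h n) := by
  obtain ⟨b, hb⟩ := hmax.exists_basis 1
  obtain ⟨d, hd⟩ := hmax.exists_basis n
  refine bijective_of_map_tprod_basis (fun _ => b.reindex (Equiv.funUnique (Fin 1) _)) d
    (shiftHom hmap h n).toLinearMap fun f => ?_
  rw [AlgHom.toLinearMap_apply, shiftHom_tprod, hd]
  refine Finset.prod_congr rfl fun j _ => ?_
  rw [Module.Basis.reindex_apply, hb, Fin.prod_univ_one]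
  exact iotaLoc_newMonomial hmap h n j (f j)

end Localization

end WideMatrixShift

open WideMatrixShift in
theorem shift_theorem_general
    (K : Type) [CommRing K] (c : ℕ) (I : ∀ n : ℕ, Ideal (MvPolynomial (Fin c × Fin n) K))
    (hmap : ChainMap K c I) (hne : I 0 ≠ ⊤) :
    ∃ (n₀ : ℕ) (h : Qu K c I n₀), h ≠ 0 ∧
      ∀ n : ℕ,
        letI : Algebra (Localization.Away h) (Bp K c I hmap n₀ h 1) :=
          (structMap K c I hmap n₀ h 1).toAlgebra
        letI : Algebra (Localization.Away h) (Bp K c I hmap n₀ h n) :=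
          (structMap K c I hmap n₀ h n).toAlgebra
        ∃ Φ : (⨂[Localization.Away h] _ : Fin n, Bp K c I hmap n₀ h 1)
            →ₐ[Localization.Away h] Bp K c I hmap n₀ h n,
          (∀ x : Fin n → Bp K c I hmap n₀ h 1,
            Φ (PiTensorProduct.tprod (Localization.Away h) x)
              = ∏ j : Fin n, iotaLoc K c I hmap n₀ h n j (x j)) ∧
          Function.Bijective Φ := by
  obtain ⟨n₀, h, hh, hmax⟩ := exists_hasMaximalExponents hmap MonomialOrder.lex hne
  exact ⟨n₀, h, hh, fun n =>
    ⟨shiftHom hmap h n, shiftHom_tprod hmap h n, hmax.bijective_shiftHom n⟩⟩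

open WideMatrixShift in
set_option synthInstance.maxHeartbeats 1000000 in
set_option maxHeartbeats 1000000 in
/-- **The Shift Theorem.**  Let `(I n)` be a symmetric wide-matrix ideal chain over a
Noetherian ring `K` such that all `I n` are radical, all induced maps between the
quotients `A_n/I_n` are injective, and `I 0 ≠ A_0`.  Then there are `n₀ ∈ ℕ` and a
nonzero `h ∈ A_{n₀}/I_{n₀}` such that, with `B'_n := (A_{n₀+n}/I_{n₀+n})[1/h]`, for every
`n ≥ 1` the natural `B'_0`-algebra homomorphism from the `n`-fold tensor product
`B'_1 ⊗_{B'_0} ⋯ ⊗_{B'_0} B'_1` to `B'_n`, whose `j`-th tensor factor maps via `ι_j`, is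
an isomorphism. -/
theorem shift_theorem
    (K : Type) [CommRing K] [IsNoetherianRing K] (c : ℕ)
    (I : ∀ n : ℕ, Ideal (MvPolynomial (Fin c × Fin n) K))
    (hsym : ∀ (n : ℕ) (π : Equiv.Perm (Fin n)),
      Ideal.map (MvPolynomial.rename (Prod.map (id : Fin c → Fin c) π)) (I n) = I n)
    (hincl : ∀ n : ℕ,
      Ideal.map (MvPolynomial.rename
          (Prod.map (id : Fin c → Fin c) (Fin.castSucc : Fin n → Fin (n + 1))))
        (I n) ≤ I (n + 1))
    (hmap : ChainMap K c I)
    (hrad : ∀ n : ℕ, (I n).IsRadical)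
    (hinj : ∀ (m n : ℕ) (π : Fin m → Fin n) (hπ : Function.Injective π),
      Function.Injective (ind K c I hmap m n π hπ))
    (hne : I 0 ≠ ⊤) :
    ∃ (n₀ : ℕ) (h : Qu K c I n₀), h ≠ 0 ∧
      ∀ n : ℕ, 1 ≤ n →
        letI : Algebra (Localization.Away h) (Bp K c I hmap n₀ h 1) :=
          (structMap K c I hmap n₀ h 1).toAlgebra
        letI : Algebra (Localization.Away h) (Bp K c I hmap n₀ h n) :=
          (structMap K c I hmap n₀ h n).toAlgebra
        ∃ Φ : (⨂[Localization.Away h] _ : Fin n, Bp K c I hmap n₀ h 1)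
            →ₐ[Localization.Away h] Bp K c I hmap n₀ h n,
          (∀ x : Fin n → Bp K c I hmap n₀ h 1,
            Φ (PiTensorProduct.tprod (Localization.Away h) x)
              = ∏ j : Fin n, iotaLoc K c I hmap n₀ h n j (x j)) ∧
          Function.Bijective Φ := by
  obtain ⟨n₀, h, hh, hΦ⟩ := shift_theorem_general K c I hmap hne
  exact ⟨n₀, h, hh, fun n _ => hΦ n⟩
end

section
/- Let k ∈ ℕ, let G be a subgroup of the symmetric group on [k], and let M ⊆ ℕ^k be a set such that: (i) for all β ∈ M and g ∈ G, the vector obtained from β by permuting coordinates according to g lies in M; and (ii) for all β ∈ M and j ∈ [k] with β_j > 0, the vector β − e_j lies in M, where e_j is the j-th standard basis vector. For n ∈ ℕ let M_n := {β ∈ M : Σ_{j∈[k]} β_j = n}, with G acting on M_n by permuting coordinates. Then the number of G-orbits on M_n is a quasipolynomial in n for all n ≫ 0. -/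
/-!
By Burnside's lemma it suffices to count, for each `g ∈ G`, the vectors of `M` fixed by `g`. These
are constant on the cycles of `g`, so they are the vectors of a lower set of `ℕ^{cycles}`, graded by
a weighted degree.

The Hilbert series of a lower set `D` is rational with denominator a product of polynomials
`1 - X ^ w`. If `e_i ∈ D`, then `D` is the disjoint union of its face `{β ∈ D | β i = 0}` and of
`D' + e_i`, where `D' = {γ | γ + e_i ∈ D} ⊆ D`. The face is smaller than `D`. Either `D'` is
too, and Dickson's lemma allows induction, or `D' = D`, and then `(1 - X ^ w) * H_D = H_face` for
`w` the weight of `e_i`.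

Finally, every such denominator divides a power of `1 - X ^ N` for some `N`, which makes the
coefficients eventually polynomial along each residue class modulo `N`.
-/

open scoped Polynomial PowerSeries

section RationalSeries

variable (R : Type*) [CommRing R]

/-- The products of polynomials `1 - X ^ w` with `w > 0`, the denominators of Hilbert series of
positively graded objects. -/
noncomputable def hilbertDenominators : Submonoid R[X] :=
  Submonoid.closure {d | ∃ w, 0 < w ∧ d = 1 - Polynomial.X ^ w}

variable {R}

lemma one_sub_X_pow_mem_hilbertDenominators {w : ℕ} (hw : 0 < w) :
    (1 - Polynomial.X ^ w : R[X]) ∈ hilbertDenominators R :=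
  Submonoid.subset_closure ⟨w, hw, rfl⟩

lemma exists_dvd_one_sub_X_pow_pow {d : R[X]} (hd : d ∈ hilbertDenominators R) :
    ∃ N, 0 < N ∧ ∃ m, d ∣ (1 - Polynomial.X ^ N) ^ m := by
  induction hd using Submonoid.closure_induction with
  | mem d hd =>
    obtain ⟨w, hw, rfl⟩ := hd
    exact ⟨w, hw, 1, by rw [pow_one]⟩
  | one => exact ⟨1, one_pos, 0, one_dvd _⟩
  | mul d e _ _ hd he =>
    obtain ⟨N, hN, m, hd⟩ := hd
    obtain ⟨N', hN', m', he⟩ := he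
    have hdvd : (1 - Polynomial.X ^ N : R[X]) ∣ 1 - Polynomial.X ^ (N * N') := by
      rw [pow_mul]
      exact one_sub_dvd_one_sub_pow _ _
    have hdvd' : (1 - Polynomial.X ^ N' : R[X]) ∣ 1 - Polynomial.X ^ (N * N') := by
      rw [pow_mul']
      exact one_sub_dvd_one_sub_pow _ _
    refine ⟨N * N', Nat.mul_pos hN hN', m + m', ?_⟩
    rw [pow_add]
    exact mul_dvd_mul (hd.trans (pow_dvd_pow_of_dvd hdvd m))
      (he.trans (pow_dvd_pow_of_dvd hdvd' m'))

variable (R) in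
/-- The power series of the form `p / d` with `p` a polynomial and `d` a product of polynomials
`1 - X ^ w`, encoded by the equation `d * a = p`. -/
def hilbertRational : Submodule R R⟦X⟧ where
  carrier := {a | ∃ d ∈ hilbertDenominators R, ∃ p : R[X], (d : R⟦X⟧) * a = p}
  zero_mem' := ⟨1, one_mem _, 0, by rw [mul_zero, Polynomial.coe_zero]⟩
  add_mem' := by
    rintro a b ⟨d, hd, p, hp⟩ ⟨e, he, q, hq⟩
    refine ⟨d * e, mul_mem hd he, e * p + d * q, ?_⟩
    push_cast
    rw [← hp, ← hq]
    ring
  smul_mem' := by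
    rintro r a ⟨d, hd, p, hp⟩
    refine ⟨d, hd, r • p, ?_⟩
    rw [Polynomial.coe_smul, ← hp, mul_smul_comm]

lemma one_mem_hilbertRational : (1 : R⟦X⟧) ∈ hilbertRational R :=
  ⟨1, one_mem _, 1, by rw [Polynomial.coe_one, one_mul]⟩

lemma coe_mul_mem_hilbertRational (p : R[X]) {a : R⟦X⟧} (ha : a ∈ hilbertRational R) :
    (p : R⟦X⟧) * a ∈ hilbertRational R := by
  obtain ⟨d, hd, q, hq⟩ := ha
  refine ⟨d, hd, p * q, ?_⟩
  rw [Polynomial.coe_mul, ← hq, mul_left_comm]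

lemma mem_hilbertRational_of_mul {w : ℕ} (hw : 0 < w) {a : R⟦X⟧}
    (h : (1 - PowerSeries.X ^ w) * a ∈ hilbertRational R) : a ∈ hilbertRational R := by
  obtain ⟨d, hd, p, hp⟩ := h
  refine ⟨d * (1 - Polynomial.X ^ w),
    mul_mem hd (one_sub_X_pow_mem_hilbertDenominators hw), p, ?_⟩
  rw [← hp]
  push_cast
  ring

end RationalSeries

section ResidueSection

variable {R : Type*} [CommRing R] {N i : ℕ}

variable (N i) in
/-- The section of a power series along the residue class of `i` modulo `N`: its `j`-th coefficient
is the coefficient of index `i + N * j`. -/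
noncomputable def residueSection : R⟦X⟧ →ₗ[R] R⟦X⟧ where
  toFun a := .mk fun j => a.coeff (i + N * j)
  map_add' _ _ := rfl
  map_smul' _ _ := rfl

@[simp]
lemma coeff_residueSection (a : R⟦X⟧) (j : ℕ) :
    (residueSection N i a).coeff j = a.coeff (i + N * j) :=
  PowerSeries.coeff_mk j fun j => a.coeff (i + N * j)

lemma residueSection_X_pow_mul (hi : i < N) (a : R⟦X⟧) :
    residueSection N i (PowerSeries.X ^ N * a) = PowerSeries.X * residueSection N i a := by
  ext j
  rw [coeff_residueSection, PowerSeries.coeff_X_pow_mul']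
  cases j with
  | zero => rw [if_neg (by omega), PowerSeries.coeff_zero_X_mul]
  | succ j =>
    rw [if_pos (by rw [mul_add]; omega), PowerSeries.coeff_succ_X_mul, coeff_residueSection]
    congr 2
    rw [mul_add]
    omega

lemma residueSection_one_sub_X_pow_pow_mul (hi : i < N) (m : ℕ) (a : R⟦X⟧) :
    residueSection N i ((1 - PowerSeries.X ^ N) ^ m * a)
      = (1 - PowerSeries.X) ^ m * residueSection N i a := by
  induction m generalizing a with
  | zero => rw [pow_zero, pow_zero, one_mul, one_mul]
  | succ m ih =>
    rw [pow_succ, mul_assoc, ih, sub_mul, one_mul, map_sub, residueSection_X_pow_mul hi]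
    ring

lemma exists_coe_eq_residueSection (hN : 0 < N) (p : R[X]) :
    ∃ q : R[X], (q : R⟦X⟧) = residueSection N i p := by
  refine ⟨PowerSeries.trunc (p.natDegree + 1) (residueSection N i p), ?_⟩
  ext j
  rw [Polynomial.coeff_coe, PowerSeries.coeff_trunc, coeff_residueSection, Polynomial.coeff_coe,
    ite_eq_left_iff]
  intro hj
  have : j ≤ N * j := Nat.le_mul_of_pos_left j hN
  exact (Polynomial.coeff_eq_zero_of_natDegree_lt (by omega)).symm

end ResidueSection

lemma exists_eval_eq_coeff_of_one_sub_X_pow_mul_eq {F : Type*} [Field F] [CharZero F]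
    {a : F⟦X⟧} {p : F[X]} {m : ℕ} (h : (1 - PowerSeries.X) ^ m * a = (p : F⟦X⟧)) :
    ∃ q : F[X], ∃ J, ∀ j, J ≤ j → a.coeff j = q.eval (j : F) := by
  refine ⟨.hilbertPoly p m, p.natDegree + 1, fun j hj => ?_⟩
  rw [← Polynomial.coeff_mul_invOneSubPow_eq_hilbertPoly_eval m (Nat.lt_of_succ_le hj), ← h,
    ← PowerSeries.invOneSubPow_inv_eq_one_sub_pow, mul_right_comm, Units.inv_val, one_mul]

lemma exists_eval_eq_coeff_residueClass {F : Type*} [Field F] [CharZero F] {a : F⟦X⟧} {p : F[X]}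
    {N m i : ℕ} (hi : i < N) (h : (1 - PowerSeries.X ^ N) ^ m * a = (p : F⟦X⟧)) :
    ∃ q : F[X], ∃ n₀, ∀ n, n₀ ≤ n → n % N = i → a.coeff n = q.eval (n : F) := by
  obtain ⟨r, hr⟩ := exists_coe_eq_residueSection (i := i) (by omega : 0 < N) p
  rw [← h, residueSection_one_sub_X_pow_pow_mul hi] at hr
  obtain ⟨q, J, hq⟩ := exists_eval_eq_coeff_of_one_sub_X_pow_mul_eq hr.symm
  have hN : (N : F) ≠ 0 := Nat.cast_ne_zero.2 (by omega)
  refine ⟨q.comp (Polynomial.C (N : F)⁻¹ * (Polynomial.X - Polynomial.C (i : F))), N * J,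
    fun n hn hni => ?_⟩
  have hdiv : i + N * (n / N) = n := hni ▸ Nat.mod_add_div n N
  have hJ : J ≤ n / N := (Nat.le_div_iff_mul_le (by omega)).2 (by rwa [mul_comm])
  have hcoeff := hq _ hJ
  rw [coeff_residueSection, hdiv] at hcoeff
  have hcast : (N : F)⁻¹ * (n - i) = (n / N : ℕ) := by
    rw [inv_mul_eq_iff_eq_mul₀ hN, sub_eq_iff_eq_add']
    exact_mod_cast hdiv.symm
  rw [hcoeff]
  simp only [Polynomial.eval_comp, Polynomial.eval_mul, Polynomial.eval_C, Polynomial.eval_sub,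
    Polynomial.eval_X, hcast]

theorem quasiPolynomialCount_of_mem_hilbertRational {a : ℕ → ℕ}
    (h : (PowerSeries.mk fun n => (a n : ℚ)) ∈ hilbertRational ℚ) : QuasiPolynomialCount a := by
  obtain ⟨d, hd, p, hp⟩ := h
  obtain ⟨N, hN, m, c, hc⟩ := exists_dvd_one_sub_X_pow_pow hd
  have : NeZero N := ⟨hN.ne'⟩
  have hrat : (1 - PowerSeries.X ^ N) ^ m * PowerSeries.mk (fun n => (a n : ℚ))
      = ((c * p : ℚ[X]) : ℚ⟦X⟧) := by
    have hc' := congrArg ((↑) : ℚ[X] → ℚ⟦X⟧) hc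
    push_cast at hc'
    rw [hc', Polynomial.coe_mul, ← hp]
    ring
  choose q n₀ hq using fun i : ZMod N => exists_eval_eq_coeff_residueClass i.val_lt hrat
  refine ⟨fun n => (q n).eval (n : ℚ), ⟨N, hN, q, fun n => rfl⟩, ∑ i, n₀ i, fun n hn => ?_⟩
  have hle : n₀ (n : ZMod N) ≤ n :=
    (Finset.single_le_sum (fun _ _ => Nat.zero_le _) (Finset.mem_univ _)).trans hn
  simpa using hq n n hle (ZMod.val_natCast N n).symm

theorem wellFoundedLT_lowerSet {α : Type*} [Preorder α] [WellQuasiOrderedLE α] :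
    WellFoundedLT (LowerSet α) := by
  rw [WellFoundedLT, isWellFounded_iff, RelEmbedding.wellFounded_iff_isEmpty]
  refine ⟨fun f => ?_⟩
  have hanti : StrictAnti f := fun _ _ h => f.map_rel_iff.2 h
  choose x hx hx' using fun n : ℕ =>
    Set.exists_of_ssubset (LowerSet.coe_ssubset_coe.2 (hanti n.lt_succ_self))
  obtain ⟨i, j, hij, hle⟩ := wellQuasiOrdered_le x
  exact hx' i (hanti.antitone (Nat.succ_le_of_lt hij) ((f j).lower hle (hx j)))

lemma isLowerSet_of_update_sub_one_mem {ι : Type*} [Finite ι] [DecidableEq ι] {M : Set (ι → ℕ)}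
    (h : ∀ β ∈ M, ∀ j, 0 < β j → Function.update β j (β j - 1) ∈ M) : IsLowerSet M := by
  intro β
  induction β using WellFoundedLT.induction with
  | ind β ih =>
    intro γ hγβ hβ
    obtain rfl | hlt := hγβ.eq_or_lt
    · exact hβ
    obtain ⟨-, j, hj⟩ := Pi.lt_def.1 hlt
    have hsub : Function.update β j (β j - 1) < β := update_lt_self_iff.2 (by omega)
    have hle : γ ≤ Function.update β j (β j - 1) :=
      le_update_iff.2 ⟨by omega, fun i _ => hγβ i⟩
    exact ih _ hsub hle (h β hβ j (by omega))

lemma single_one_le_iff {ι : Type*} [DecidableEq ι] {i : ι} {β : ι → ℕ} :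
    Pi.single i 1 ≤ β ↔ β i ≠ 0 := by
  rw [Pi.single, update_le_iff, Nat.one_le_iff_ne_zero]
  exact and_iff_left fun _ _ => Nat.zero_le _

lemma subset_singleton_zero_of_forall_single_notMem {ι : Type*} [DecidableEq ι] {D : Set (ι → ℕ)}
    (hD : IsLowerSet D) (h : ∀ i, Pi.single i 1 ∉ D) : D ⊆ {0} := by
  intro β hβ
  by_contra hne
  obtain ⟨i, hi⟩ := Function.ne_iff.1 hne
  exact h i (hD (single_one_le_iff.2 hi) hβ)

section HilbertSeries

variable {A : Type*} [AddCommMonoid A]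

/-- The generating function counting the elements of `S` by degree. A degree in which `S` has
infinitely many elements contributes `0`. -/
noncomputable def hilbertSeries (deg : A →+ ℕ) (S : Set A) : ℚ⟦X⟧ :=
  .mk fun n => ({β | β ∈ S ∧ deg β = n}.ncard : ℚ)

variable {deg : A →+ ℕ}

lemma hilbertSeries_empty : hilbertSeries deg ∅ = 0 := by
  ext n
  simp [hilbertSeries]

lemma hilbertSeries_singleton_zero : hilbertSeries deg {0} = 1 := by
  ext n
  have hset : {β | β ∈ ({0} : Set A) ∧ deg β = n} = if n = 0 then {0} else ∅ := by
    ext β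
    split_ifs with hn
    · exact and_iff_left_of_imp (by rintro rfl; rw [map_zero, hn])
    · simp only [Set.mem_empty_iff_false, iff_false]
      rintro ⟨rfl, hβ⟩
      exact hn (hβ ▸ map_zero deg)
  rw [hilbertSeries, PowerSeries.coeff_mk, PowerSeries.coeff_one, hset]
  split_ifs <;> simp

lemma hilbertSeries_mem_hilbertRational_of_subset_zero {S : Set A} (hS : S ⊆ {0}) :
    hilbertSeries deg S ∈ hilbertRational ℚ := by
  obtain rfl | rfl := Set.subset_singleton_iff_eq.1 hS
  · rw [hilbertSeries_empty]
    exact zero_mem _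
  · rw [hilbertSeries_singleton_zero]
    exact one_mem_hilbertRational

lemma hilbertSeries_union (hdeg : ∀ n, {β | deg β = n}.Finite) {S T : Set A} (h : Disjoint S T) :
    hilbertSeries deg (S ∪ T) = hilbertSeries deg S + hilbertSeries deg T := by
  ext n
  have hunion : {β | β ∈ S ∪ T ∧ deg β = n} =
      {β | β ∈ S ∧ deg β = n} ∪ {β | β ∈ T ∧ deg β = n} := by
    ext β
    exact or_and_right
  have hdisj : Disjoint {β | β ∈ S ∧ deg β = n} {β | β ∈ T ∧ deg β = n} :=
    h.mono (fun _ => And.left) (fun _ => And.left)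
  simp only [hilbertSeries, map_add, PowerSeries.coeff_mk, hunion]
  rw [Set.ncard_union_eq hdisj ((hdeg n).subset fun _ => And.right)
    ((hdeg n).subset fun _ => And.right), Nat.cast_add]

lemma hilbertSeries_image_add_right [IsRightCancelAdd A] (v : A) (S : Set A) :
    hilbertSeries deg ((· + v) '' S) = PowerSeries.X ^ deg v * hilbertSeries deg S := by
  ext n
  rw [PowerSeries.coeff_X_pow_mul']
  simp only [hilbertSeries, PowerSeries.coeff_mk]
  split_ifs with hn
  · have : {β | β ∈ (· + v) '' S ∧ deg β = n} = (· + v) '' {γ | γ ∈ S ∧ deg γ = n - deg v} := by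
      ext β
      constructor
      · rintro ⟨⟨γ, hγ, rfl⟩, hβ⟩
        exact ⟨γ, ⟨hγ, by rw [← hβ, map_add, Nat.add_sub_cancel]⟩, rfl⟩
      · rintro ⟨γ, ⟨hγ, hdeg⟩, rfl⟩
        exact ⟨⟨γ, hγ, rfl⟩, by rw [map_add, hdeg, Nat.sub_add_cancel hn]⟩
    rw [this, Set.ncard_image_of_injective _ (add_left_injective v)]
  · have : {β | β ∈ (· + v) '' S ∧ deg β = n} = ∅ := by
      rw [Set.eq_empty_iff_forall_notMem]
      rintro _ ⟨⟨γ, -, rfl⟩, hβ⟩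
      exact hn (hβ ▸ map_add deg γ v ▸ Nat.le_add_left _ _)
    rw [this, Set.ncard_empty, Nat.cast_zero]

lemma hilbertSeries_image {B : Type*} [AddCommMonoid B] (f : B →+ A) (hf : Function.Injective f)
    (S : Set B) : hilbertSeries deg (f '' S) = hilbertSeries (deg.comp f) S := by
  ext n
  have : {β | β ∈ f '' S ∧ deg β = n} = f '' {γ | γ ∈ S ∧ deg.comp f γ = n} := by
    ext β
    constructor
    · rintro ⟨⟨γ, hγ, rfl⟩, hβ⟩
      exact ⟨γ, ⟨hγ, hβ⟩, rfl⟩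
    · rintro ⟨γ, ⟨hγ, hdeg⟩, rfl⟩
      exact ⟨⟨γ, hγ, rfl⟩, hdeg⟩
  simp only [hilbertSeries, PowerSeries.coeff_mk, this, Set.ncard_image_of_injective _ hf]

lemma finite_setOf_degree_eq [PartialOrder A] [CanonicallyOrderedAdd A] [WellQuasiOrderedLE A]
    (hdeg : ∀ β, deg β = 0 → β = 0) (n : ℕ) : {β | deg β = n}.Finite := by
  refine WellQuasiOrderedLE.finite_of_isAntichain fun β hβ γ hγ hne hle => hne ?_
  obtain ⟨δ, rfl⟩ := le_iff_exists_add.1 hle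
  have hδ : deg δ = 0 := by
    rw [Set.mem_ofPred_eq, map_add] at hγ
    rw [Set.mem_ofPred_eq] at hβ
    omega
  rw [hdeg δ hδ, add_zero]

end HilbertSeries

section LowerSetSeries

variable {ι : Type*} [Finite ι] {deg : (ι → ℕ) →+ ℕ}

lemma hilbertSeries_eq_face_add_shift [DecidableEq ι] (hdeg : ∀ β, deg β = 0 → β = 0)
    (D : Set (ι → ℕ)) (i : ι) :
    hilbertSeries deg D = hilbertSeries deg {β | β ∈ D ∧ β i = 0} +
      PowerSeries.X ^ deg (Pi.single i 1) * hilbertSeries deg {γ | γ + Pi.single i 1 ∈ D} := by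
  have hdisj : Disjoint {β | β ∈ D ∧ β i = 0}
      ((· + (Pi.single i 1 : ι → ℕ)) '' {γ | γ + Pi.single i 1 ∈ D}) := by
    rw [Set.disjoint_left]
    rintro _ ⟨-, h⟩ ⟨γ, -, rfl⟩
    simp at h
  rw [← hilbertSeries_image_add_right, ← hilbertSeries_union (finite_setOf_degree_eq hdeg) hdisj]
  congr 1
  ext β
  constructor
  · intro hβ
    by_cases hi : β i = 0
    · exact .inl ⟨hβ, hi⟩
    · have hle : Pi.single i 1 ≤ β := single_one_le_iff.2 hi
      exact .inr ⟨β - Pi.single i 1, by rwa [Set.mem_ofPred_eq, tsub_add_cancel_of_le hle],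
        tsub_add_cancel_of_le hle⟩
  · rintro (⟨hβ, -⟩ | ⟨γ, hγ, rfl⟩)
    · exact hβ
    · exact hγ

theorem hilbertSeries_lowerSet_mem_hilbertRational (hdeg : ∀ β, deg β = 0 → β = 0)
    (D : LowerSet (ι → ℕ)) : hilbertSeries deg D ∈ hilbertRational ℚ := by
  classical
  have := wellFoundedLT_lowerSet (α := ι → ℕ)
  induction D using WellFoundedLT.induction with
  | ind D ih =>
    by_cases hbasis : ∃ i, Pi.single i 1 ∈ D
    · obtain ⟨i, hi⟩ := hbasis
      let face : LowerSet (ι → ℕ) :=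
        ⟨{β | β ∈ D ∧ β i = 0}, fun β γ hγβ hβ =>
          ⟨D.lower hγβ hβ.1, Nat.le_zero.1 (hβ.2 ▸ hγβ i)⟩⟩
      let shift : LowerSet (ι → ℕ) :=
        ⟨{γ | γ + Pi.single i 1 ∈ D}, fun β γ hγβ hβ => D.lower (add_le_add_left hγβ _) hβ⟩
      have hrec : hilbertSeries deg D = hilbertSeries deg face +
          PowerSeries.X ^ deg (Pi.single i 1) * hilbertSeries deg shift :=
        hilbertSeries_eq_face_add_shift hdeg D i
      have hface : hilbertSeries deg face ∈ hilbertRational ℚ := by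
        refine ih face (lt_of_le_of_ne (fun _ => And.left) fun h => ?_)
        have : Pi.single i 1 ∈ face := h ▸ hi
        simpa using this.2
      have hshift_le : shift ≤ D := fun γ hγ => D.lower le_self_add hγ
      obtain hshift | hshift := hshift_le.eq_or_lt
      · have hpos : 0 < deg (Pi.single i 1) := by
          refine Nat.pos_of_ne_zero fun h => one_ne_zero (α := ℕ) ?_
          simpa using congrFun (hdeg _ h) i
        refine mem_hilbertRational_of_mul hpos ?_
        rw [hshift] at hrec
        rwa [sub_mul, one_mul, sub_eq_of_eq_add hrec]
      · rw [hrec, ← Polynomial.coe_X, ← Polynomial.coe_pow]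
        exact add_mem hface (coe_mul_mem_hilbertRational _ (ih shift hshift))
    · exact hilbertSeries_mem_hilbertRational_of_subset_zero
        (subset_singleton_zero_of_forall_single_notMem D.lower (not_exists.1 hbasis))

end LowerSetSeries

lemma exists_comp_eq_of_comp_perm_eq {ι α : Type*} {g : Equiv.Perm ι} {β : ι → α}
    (h : β ∘ g = β) :
    ∃ γ : Quotient (Equiv.Perm.SameCycle.setoid g) → α, γ ∘ Quotient.mk _ = β := by
  refine ⟨Quotient.lift β ?_, rfl⟩
  rintro i _ ⟨m, rfl⟩
  have hstab : DomMulAct.mk g ∈ MulAction.stabilizer (Equiv.Perm ι)ᵈᵐᵃ β := h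
  exact (congrFun (zpow_mem hstab m) i).symm

theorem hilbertSeries_fixed_mem_hilbertRational {ι : Type*} [Finite ι] {deg : (ι → ℕ) →+ ℕ}
    (hdeg : ∀ β, deg β = 0 → β = 0) {M : Set (ι → ℕ)} (hM : IsLowerSet M) (g : Equiv.Perm ι) :
    hilbertSeries deg {β | β ∈ M ∧ β ∘ g = β} ∈ hilbertRational ℚ := by
  let r : ι → Quotient (Equiv.Perm.SameCycle.setoid g) := Quotient.mk _
  have hr : Function.Surjective r := Quotient.mk_surjective
  have hrg : r ∘ g = r :=
    funext fun j => Quotient.sound (Equiv.Perm.sameCycle_apply_left.2 (.refl g j))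
  let pullback := (LinearMap.funLeft ℕ ℕ r).toAddMonoidHom
  have hinj : Function.Injective pullback := hr.injective_comp_right
  let D : LowerSet (Quotient (Equiv.Perm.SameCycle.setoid g) → ℕ) :=
    ⟨{γ | γ ∘ r ∈ M}, fun _ _ hle hγ => hM (fun j => hle (r j)) hγ⟩
  have himage : {β | β ∈ M ∧ β ∘ g = β} = pullback '' D := by
    ext β
    constructor
    · rintro ⟨hβ, hfix⟩
      obtain ⟨γ, rfl⟩ := exists_comp_eq_of_comp_perm_eq hfix
      exact ⟨γ, hβ, rfl⟩
    · rintro ⟨γ, hγ, rfl⟩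
      exact ⟨hγ, congrArg (γ ∘ ·) hrg⟩
  rw [himage, hilbertSeries_image pullback hinj]
  refine hilbertSeries_lowerSet_mem_hilbertRational (fun γ hγ => hinj ?_) D
  rw [map_zero]
  exact hdeg _ hγ

lemma sum_ncard_fixed_eq_card_orbits_mul_card {ι α : Type*} (G : Subgroup (Equiv.Perm ι))
    [Fintype G] {S : Set (ι → α)} (hS : S.Finite) (hG : ∀ β ∈ S, ∀ g ∈ G, β ∘ ⇑g ∈ S) :
    ∑ g : G, {β | β ∈ S ∧ β ∘ ⇑(g : Equiv.Perm ι) = β}.ncard =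
      Nat.card (Quot fun β γ : S => ∃ g ∈ G, β.1 ∘ ⇑g = γ.1) * Nat.card G := by
  classical
  let X : SubMulAction Gᵈᵐᵃ (ι → α) :=
    ⟨S, fun g β hβ => hG β hβ _ (DomMulAct.mk.symm g).2⟩
  have : Finite X := hS
  let : Fintype X := .ofFinite X
  let : Fintype Gᵈᵐᵃ := .ofEquiv G DomMulAct.mk
  have horbits : Nat.card (Quot fun β γ : S => ∃ g ∈ G, β.1 ∘ ⇑g = γ.1) =
      Fintype.card (MulAction.orbitRel.Quotient Gᵈᵐᵃ X) := by
    rw [← Nat.card_eq_fintype_card]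
    refine Nat.card_congr (Quot.congrRight fun β γ => ?_)
    rw [MulAction.orbitRel_apply, MulAction.mem_orbit_symm]
    constructor
    · rintro ⟨g, hg, h⟩
      exact ⟨DomMulAct.mk ⟨g, hg⟩, Subtype.ext h⟩
    · rintro ⟨g, h⟩
      exact ⟨_, (DomMulAct.mk.symm g).2, congrArg Subtype.val h⟩
  have hfixed (g : G) : {β | β ∈ S ∧ β ∘ ⇑(g : Equiv.Perm ι) = β}.ncard =
      Fintype.card (MulAction.fixedBy X (DomMulAct.mk g)) := by
    rw [← Nat.card_eq_fintype_card, ← Nat.card_coe_set_eq]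
    refine Nat.card_congr (.trans (Equiv.subtypeSubtypeEquivSubtypeInter _ _).symm
      (Equiv.subtypeEquivRight fun β : X => ?_))
    exact (Subtype.ext_iff (a1 := DomMulAct.mk g • β) (a2 := β)).symm
  rw [horbits, Nat.card_congr DomMulAct.mk, Nat.card_eq_fintype_card,
    ← MulAction.sum_card_fixedBy_eq_card_orbits_mul_card_group, ← DomMulAct.mk.sum_comp]
  exact Finset.sum_congr rfl fun g _ => hfixed g

lemma orbitSeries_eq_inv_card_smul_sum_hilbertSeries {ι α : Type*} [AddCommMonoid α]
    {deg : (ι → α) →+ ℕ} (hfin : ∀ n, {β | deg β = n}.Finite) (G : Subgroup (Equiv.Perm ι))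
    [Fintype G] (hdegG : ∀ β, ∀ g ∈ G, deg (β ∘ ⇑g) = deg β) {M : Set (ι → α)}
    (hG : ∀ β ∈ M, ∀ g ∈ G, β ∘ ⇑g ∈ M) :
    (PowerSeries.mk fun n => (Nat.card (Quot fun β γ : {β // β ∈ M ∧ deg β = n} =>
      ∃ g ∈ G, β.1 ∘ ⇑g = γ.1) : ℚ)) =
    (Nat.card G : ℚ)⁻¹ • ∑ g : G, hilbertSeries deg {β | β ∈ M ∧ β ∘ ⇑(g : Equiv.Perm ι) = β} := by
  ext n
  have hburnside := sum_ncard_fixed_eq_card_orbits_mul_card G (S := {β | β ∈ M ∧ deg β = n})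
    ((hfin n).subset fun β hβ => hβ.2)
    fun β hβ g hg => ⟨hG β hβ.1 g hg, (hdegG β g hg).trans hβ.2⟩
  have hcard : (Nat.card G : ℚ) ≠ 0 := Nat.cast_ne_zero.2 Nat.card_pos.ne'
  simp only [map_smul, map_sum, hilbertSeries, PowerSeries.coeff_mk, Set.mem_ofPred_eq,
    and_right_comm, smul_eq_mul] at hburnside ⊢
  rw [eq_inv_mul_iff_mul_eq₀ hcard, mul_comm]
  exact_mod_cast hburnside.symm

theorem orbit_count_downward_closed_monomial_sets_general {ι : Type*} [Finite ι]
    (deg : (ι → ℕ) →+ ℕ) (hdeg : ∀ β, deg β = 0 → β = 0) (G : Subgroup (Equiv.Perm ι))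
    (hdegG : ∀ β, ∀ g ∈ G, deg (β ∘ ⇑g) = deg β) (M : Set (ι → ℕ))
    (hG : ∀ β ∈ M, ∀ g ∈ G, β ∘ ⇑g ∈ M) (hM : IsLowerSet M) :
    QuasiPolynomialCount (fun n =>
      Nat.card (Quot (fun (β γ : {β : ι → ℕ // β ∈ M ∧ deg β = n}) =>
        ∃ g ∈ G, β.1 ∘ ⇑g = γ.1))) := by
  have : Fintype G := .ofFinite G
  refine quasiPolynomialCount_of_mem_hilbertRational ?_
  rw [orbitSeries_eq_inv_card_smul_sum_hilbertSeries (finite_setOf_degree_eq hdeg) G hdegG hG]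
  exact Submodule.smul_mem _ _ (sum_mem fun g _ =>
    hilbertSeries_fixed_mem_hilbertRational hdeg hM g)

/-- The degree of the monomial with exponent vector `β`, as an additive map. -/
def monomialDegree (ι : Type*) [Fintype ι] : (ι → ℕ) →+ ℕ where
  toFun β := ∑ j, β j
  map_zero' := Finset.sum_const_zero
  map_add' _ _ := Finset.sum_add_distrib

lemma eq_zero_of_monomialDegree_eq_zero {ι : Type*} [Fintype ι] (β : ι → ℕ)
    (h : monomialDegree ι β = 0) : β = 0 :=
  funext fun j => Finset.sum_eq_zero_iff.1 h j (Finset.mem_univ j)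

/-- Let `G ≤ Sym([k])` and let `M ⊆ ℕ^k` be `G`-stable and downward closed in the sense
that one may decrease any positive coordinate by one.  Then the number of `G`-orbits on
the degree-`n` part `M_n` of `M` is a quasipolynomial in `n` for `n ≫ 0`. -/
theorem orbit_count_downward_closed_monomial_sets
    (k : ℕ) (G : Subgroup (Equiv.Perm (Fin k))) (M : Set (Fin k → ℕ))
    (hG : ∀ β ∈ M, ∀ g ∈ G, (β ∘ ⇑g) ∈ M)
    (hdown : ∀ β ∈ M, ∀ j : Fin k, 0 < β j → Function.update β j (β j - 1) ∈ M) :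
    QuasiPolynomialCount (fun n =>
      Nat.card (Quot (fun (β γ : {β : Fin k → ℕ // β ∈ M ∧ ∑ j, β j = n}) =>
        ∃ g ∈ G, β.1 ∘ ⇑g = γ.1))) := by
  exact orbit_count_downward_closed_monomial_sets_general (monomialDegree (Fin k))
    eq_zero_of_monomialDegree_eq_zero G (fun β g _ => Equiv.sum_comp g β) M hG
    (isLowerSet_of_update_sub_one_mem hdown)
end
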